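/- arXiv:1801.09828 — 5 statements merged into one kernel-verified Lean document; each statement's English description precedes it below -/
import Mathlib

section
/- Let d ≥ 1, m ≥ 1 and let f_1, …, f_m : ℝ^d → ℝ be locally integrable. Then for every ζ ∈ ℝ^d and every x ∈ ℝ^d, the following two inequalities hold in [0,∞]: 𝓜_R(f_1,…,f_m)(x + ζ) ≤ 𝓜_R(f_1,…,f_m)(x) + S(x) and 𝓜_R(f_1,…,f_m)(x) ≤ 𝓜_R(f_1,…,f_m)(x + ζ) + S(x), where S(x) = Σ_{τ} ∏_{μ ∈ τ} 𝓜_R(Δ_ζ f_μ)(x) ∏_{ν ∈ {1,…,m} \ τ} 𝓜_R(f_ν)(x), the sum being over all nonempty subsets τ of {1,…,m}, and Δ_ζ g(y) = g(y + ζ) − g(y). -/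
/-!
Fix a rectangle `R` containing `x`, and for each `i` compare the average of `|f i|` over `R` with
its average over `R + ζ`, which is the average of `|f i (· + ζ)|` over `R`. By the triangle
inequality the two differ by at most the average `D i` of `|Δ_ζ f i|` over `R`. The product of
sums is then expanded over subsets `τ` of the index set: the empty `τ` gives the multilinear
maximal function, the others are bounded by the terms of `S` (`prod_le_prod_add_sum`).

For the upper bound on `𝓜_R(f)(x + ζ)` the undifferenced factors are averages over `R ∋ x`, as `S`
requires. For the bound on `𝓜_R(f)(x)` they would be averages over `R + ζ`, which are not controlled
by `𝓜_R(f ν)(x)`. They are therefore replaced by the minimum of the averages over `R` and over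
`R + ζ`: this minimum still satisfies the triangle inequality, and it is at most
`𝓜_R(f ν)(x)` as well as at most the average over `R + ζ`.
-/

open MeasureTheory ENNReal

/-- An open axis-parallel rectangle in `ℝ^d`. -/
def mBox {d : ℕ} (a b : Fin d → ℝ) : Set (Fin d → ℝ) :=
  Set.univ.pi fun i => Set.Ioo (a i) (b i)

/-- The multilinear strong maximal function `𝓜_R(f₁,…,f_m)(x)`, with values in `[0,∞]`. -/
noncomputable def mStrongMax {d m : ℕ} (f : Fin m → (Fin d → ℝ) → ℝ)
    (x : Fin d → ℝ) : ℝ≥0∞ :=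
  ⨆ (a : Fin d → ℝ) (b : Fin d → ℝ) (_ : x ∈ mBox a b),
    ∏ i : Fin m, (∫⁻ y in mBox a b, ENNReal.ofReal |f i y|) / volume (mBox a b)

/-- The strong maximal function `𝓜_R g(x)` of a single function, with values in `[0,∞]`. -/
noncomputable def strongMax {d : ℕ} (g : (Fin d → ℝ) → ℝ) (x : Fin d → ℝ) : ℝ≥0∞ :=
  ⨆ (a : Fin d → ℝ) (b : Fin d → ℝ) (_ : x ∈ mBox a b),
    (∫⁻ y in mBox a b, ENNReal.ofReal |g y|) / volume (mBox a b)

/-- The average of `|g|` over the box with corners `a`, `b`, with values in `[0,∞]`. -/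
noncomputable def boxAvg {d : ℕ} (g : (Fin d → ℝ) → ℝ) (a b : Fin d → ℝ) : ℝ≥0∞ :=
  (∫⁻ y in mBox a b, ENNReal.ofReal |g y|) / volume (mBox a b)

lemma boxAvg_le_strongMax {d : ℕ} (g : (Fin d → ℝ) → ℝ) {a b x : Fin d → ℝ}
    (hx : x ∈ mBox a b) : boxAvg g a b ≤ strongMax g x :=
  le_iSup_of_le a (le_iSup_of_le b (le_iSup_of_le hx le_rfl))

lemma prod_boxAvg_le_mStrongMax {d m : ℕ} (f : Fin m → (Fin d → ℝ) → ℝ) {a b x : Fin d → ℝ}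
    (hx : x ∈ mBox a b) : ∏ i, boxAvg (f i) a b ≤ mStrongMax f x :=
  le_iSup_of_le a (le_iSup_of_le b (le_iSup_of_le hx le_rfl))

lemma add_mem_mBox_add_iff {d : ℕ} {a b x : Fin d → ℝ} (ζ : Fin d → ℝ) :
    x + ζ ∈ mBox (a + ζ) (b + ζ) ↔ x ∈ mBox a b := by
  simp [mBox, Set.mem_pi]

lemma boxAvg_translate {d : ℕ} (g : (Fin d → ℝ) → ℝ) (a b ζ : Fin d → ℝ) :
    boxAvg (fun y => g (y + ζ)) a b = boxAvg g (a + ζ) (b + ζ) := by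
  have hmp : MeasurePreserving (fun y : Fin d → ℝ => y + ζ) volume volume :=
    measurePreserving_add_right volume ζ
  have hemb : MeasurableEmbedding (fun y : Fin d → ℝ => y + ζ) :=
    measurableEmbedding_addRight ζ
  have hpre : (fun y : Fin d → ℝ => y + ζ) ⁻¹' mBox (a + ζ) (b + ζ) = mBox a b := by
    ext y
    exact add_mem_mBox_add_iff ζ
  unfold boxAvg
  rw [← hpre, hmp.measure_preimage_emb hemb,
    hmp.setLIntegral_comp_preimage_emb hemb (fun y => ENNReal.ofReal |g y|)]

lemma boxAvg_le_add {d : ℕ} {g h k : (Fin d → ℝ) → ℝ} (hh : AEMeasurable h volume)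
    (hle : ∀ y, |g y| ≤ |h y| + |k y|) (a b : Fin d → ℝ) :
    boxAvg g a b ≤ boxAvg h a b + boxAvg k a b := by
  unfold boxAvg
  rw [← ENNReal.add_div, ← lintegral_add_left' (by fun_prop)]
  gcongr with y
  rw [← ENNReal.ofReal_add (abs_nonneg _) (abs_nonneg _)]
  exact ENNReal.ofReal_le_ofReal (hle y)

/-- The expansion of `∏ (C i + D i)` over subsets, where the term without any factor `D i` is
bounded through `C ≤ A` and every other term through `C ≤ B` and `D ≤ E`. -/
lemma prod_le_prod_add_sum {m : ℕ} {F A B C D E : Fin m → ℝ≥0∞}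
    (hF : ∀ i, F i ≤ C i + D i) (hA : ∀ i, C i ≤ A i) (hB : ∀ i, C i ≤ B i)
    (hE : ∀ i, D i ≤ E i) :
    ∏ i, F i ≤ ∏ i, A i + ∑ τ ∈ Finset.univ.powerset.filter Finset.Nonempty,
      (∏ μ ∈ τ, E μ) * ∏ ν ∈ τᶜ, B ν := by
  calc ∏ i, F i ≤ ∏ i, (D i + C i) :=
        Finset.prod_le_prod' fun i _ => (hF i).trans_eq (add_comm _ _)
    _ = ∑ τ ∈ Finset.univ.powerset, (∏ μ ∈ τ, D μ) * ∏ ν ∈ τᶜ, C ν := by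
        rw [Finset.prod_add]
        rfl
    _ = ∏ i, C i + ∑ τ ∈ Finset.univ.powerset.filter Finset.Nonempty,
          (∏ μ ∈ τ, D μ) * ∏ ν ∈ τᶜ, C ν := by
        rw [← Finset.sum_filter_not_add_sum_filter _ Finset.Nonempty]
        congr 1
        have : (Finset.univ : Finset (Fin m)).powerset.filter (fun τ => ¬ τ.Nonempty) = {∅} := by
          ext τ
          simp
        rw [this]
        simp
    _ ≤ _ := by
        gcongr with i _ τ _ i _ i _
        · exact hA i
        · exact hE i
        · exact hB i

theorem statement5 (d m : ℕ) (hd : 1 ≤ d) (hm : 1 ≤ m)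
    (f : Fin m → (Fin d → ℝ) → ℝ)
    (hf : ∀ i, LocallyIntegrable (f i) volume)
    (ζ x : Fin d → ℝ)
    (S : ℝ≥0∞)
    (hS : S = ∑ τ ∈ Finset.univ.powerset.filter Finset.Nonempty,
      (∏ μ ∈ τ, strongMax (fun y => f μ (y + ζ) - f μ y) x) *
        ∏ ν ∈ τᶜ, strongMax (f ν) x) :
    mStrongMax f (x + ζ) ≤ mStrongMax f x + S ∧
      mStrongMax f x ≤ mStrongMax f (x + ζ) + S := by
  have hmeas : ∀ i, AEMeasurable (f i) volume := fun i =>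
    (hf i).aestronglyMeasurable.aemeasurable
  have hmeas' : ∀ i, AEMeasurable (fun y => f i (y + ζ)) volume := fun i =>
    (hmeas i).comp_quasiMeasurePreserving
      (measurePreserving_add_right volume ζ).quasiMeasurePreserving
  subst hS
  constructor
  · refine iSup_le fun a' => iSup_le fun b' => iSup_le fun hx' => ?_
    obtain ⟨a, rfl⟩ : ∃ a, a' = a + ζ := ⟨a' - ζ, by simp⟩
    obtain ⟨b, rfl⟩ : ∃ b, b' = b + ζ := ⟨b' - ζ, by simp⟩
    have hx : x ∈ mBox a b := (add_mem_mBox_add_iff ζ).1 hx'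
    change ∏ i, boxAvg (f i) (a + ζ) (b + ζ) ≤ _
    refine (prod_le_prod_add_sum (C := fun i => boxAvg (f i) a b)
      (D := fun i => boxAvg (fun y => f i (y + ζ) - f i y) a b)
      (fun i => ?_) (fun i => le_rfl)
      (fun i => boxAvg_le_strongMax (f i) hx) (fun i => boxAvg_le_strongMax _ hx)).trans ?_
    · rw [← boxAvg_translate]
      refine boxAvg_le_add (hmeas i) (fun y => ?_) a b
      simpa using abs_add_le (f i y) (f i (y + ζ) - f i y)
    · gcongr
      exact prod_boxAvg_le_mStrongMax f hx
  · refine iSup_le fun a => iSup_le fun b => iSup_le fun hx => ?_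
    change ∏ i, boxAvg (f i) a b ≤ _
    refine (prod_le_prod_add_sum
      (C := fun i => min (boxAvg (f i) (a + ζ) (b + ζ)) (boxAvg (f i) a b))
      (D := fun i => boxAvg (fun y => f i (y + ζ) - f i y) a b)
      (fun i => ?_) (fun i => min_le_left _ _)
      (fun i => (min_le_right _ _).trans (boxAvg_le_strongMax (f i) hx))
      (fun i => boxAvg_le_strongMax _ hx)).trans ?_
    · rw [← min_add_add_right]
      refine le_min ?_ le_self_add
      rw [← boxAvg_translate]
      refine boxAvg_le_add (hmeas' i) (fun y => ?_) a b
      have := abs_sub (f i (y + ζ)) (f i (y + ζ) - f i y)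
      simpa using this
    · gcongr
      exact prod_boxAvg_le_mStrongMax f ((add_mem_mBox_add_iff ζ).2 hx)
end

section
/- Let d ≥ 1 and 1 < p, q, r < ∞. There exists a constant C depending only on d, p, q, r such that for every measurable function f : ℝ^d × ℤ × 𝔯_d → ℝ, the following inequality holds in [0,∞]: ‖ x ↦ ( Σ_{j ∈ ℤ} ( ∫_{𝔯_d} (𝓜_R f(·,j,ζ))(x)^r dζ )^{q/r} )^{1/q} ‖_{L^p(ℝ^d)} ≤ C ‖ x ↦ ( Σ_{j ∈ ℤ} ( ∫_{𝔯_d} |f(x,j,ζ)|^r dζ )^{q/r} )^{1/q} ‖_{L^p(ℝ^d)}, where 𝓜_R f(·,j,ζ) denotes the strong maximal function applied in the ℝ^d variable for each fixed (j,ζ). -/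
/-!
The strong maximal function is at most `2 ^ d` times the composition of the one-dimensional
maximal functions in the `d` coordinates (`iterate_coordMax`, `strongMax_le`), so it is enough to
bound the maximal operator `M` of `ℝ` on `L^p(ℝ; ℓ^q(L^r))` and to integrate over the other
coordinates. This iteration needs no boundedness of vector-valued operators beyond dimension one.

On `ℝ` the inequality comes from weights. Relative to every s-finite measure the uncentred maximal
function is of strong type `(p, p)` with a constant depending on `p` alone (`maxFun_strong`),
because a finite family of intervals can be thinned to overlap at most twice without changing its
union. Lerner's pointwise estimate (`IsAp.pointwise`) then gives Muckenhoupt's theorem: `M` is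
bounded on `L^p(w)` for `w` in `A_p` (`IsAp.maxFun_bound`). Consequently the Rubio de Francia
iteration produces `A_1` weights, and `u * v ^ (1 - s)` is an `A_s` weight for `A_1` weights `u`
and `v` (`IsA1.isAp`), which yields the extrapolation theorem (`extrapolation`): a family of pairs
`(F, G)` with `‖F‖ ≤ C ‖G‖` in `L^s(w)` for all `w` in `A_s` satisfies the same in `L^p(w)` for all
`w` in `A_p`, the constants depending on `w` through its weight constant only.

For values in `L^r` the weighted bound at the exponent `r` is Fubini's theorem. Extrapolating from
`r` to `q`, summing over `j` at the exponent `q`, and extrapolating from `q` to `p` gives the mixed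
norm inequality on `ℝ` (`maxFun_mixed`). Maximal functions of intervals with rational endpoints are
used throughout, so that they are measurable, jointly with parameters, for trivial reasons.
-/

open MeasureTheory ENNReal

/-- The Euclidean norm on `ℝ^d` (the `Fin d → ℝ` model). -/
noncomputable def euclNorm {d : ℕ} (ζ : Fin d → ℝ) : ℝ :=
  Real.sqrt (∑ i, ζ i ^ 2)

/-- The annulus `𝔯_d = {ζ ∈ ℝ^d : 1/2 < |ζ| ≤ 1}` (Euclidean norm). -/
def frakR (d : ℕ) : Set (Fin d → ℝ) :=
  {ζ | 1 / 2 < euclNorm ζ ∧ euclNorm ζ ≤ 1}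

/-! ### The maximal function on the line -/

/-- The open interval with rational endpoints `I.1`, `I.2`. -/
def qI (I : ℚ × ℚ) : Set ℝ := Set.Ioo (I.1 : ℝ) (I.2 : ℝ)

lemma measurableSet_qI (I : ℚ × ℚ) : MeasurableSet (qI I) := measurableSet_Ioo

/-- The average of `f` over the interval `I` with respect to `μ`; it is `0` if `μ I` is `0` or
`∞`. -/
noncomputable def avg (μ : Measure ℝ) (f : ℝ → ℝ≥0∞) (I : ℚ × ℚ) : ℝ≥0∞ :=
  (∫⁻ y in qI I, f y ∂μ) / μ (qI I)

/-- The uncentred maximal function on `ℝ` relative to `μ`. The supremum runs over intervals with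
rational endpoints, so that measurability is immediate. -/
noncomputable def maxFun (μ : Measure ℝ) (f : ℝ → ℝ≥0∞) (x : ℝ) : ℝ≥0∞ :=
  ⨆ I : ℚ × ℚ, (qI I).indicator (fun _ => avg μ f I) x

lemma measurable_maxFun (μ : Measure ℝ) (f : ℝ → ℝ≥0∞) : Measurable (maxFun μ f) := by
  unfold maxFun
  exact Measurable.iSup fun I => measurable_const.indicator (measurableSet_qI I)

lemma avg_le_maxFun (μ : Measure ℝ) (f : ℝ → ℝ≥0∞) {I : ℚ × ℚ} {x : ℝ} (hx : x ∈ qI I) :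
    avg μ f I ≤ maxFun μ f x := by
  have := le_iSup (fun I : ℚ × ℚ => (qI I).indicator (fun _ => avg μ f I) x) I
  rwa [Set.indicator_of_mem hx] at this

lemma maxFun_le {μ : Measure ℝ} {f : ℝ → ℝ≥0∞} {x : ℝ} {c : ℝ≥0∞}
    (h : ∀ I, x ∈ qI I → avg μ f I ≤ c) : maxFun μ f x ≤ c := by
  refine iSup_le fun I => ?_
  by_cases hx : x ∈ qI I
  · rw [Set.indicator_of_mem hx]; exact h I hx
  · rw [Set.indicator_of_notMem hx]; exact zero_le

lemma lt_maxFun_iff {μ : Measure ℝ} {f : ℝ → ℝ≥0∞} {x : ℝ} {c : ℝ≥0∞} :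
    c < maxFun μ f x ↔ ∃ I, x ∈ qI I ∧ c < avg μ f I := by
  unfold maxFun
  rw [lt_iSup_iff]
  refine exists_congr fun I => ?_
  by_cases hx : x ∈ qI I
  · simp [hx]
  · simp [hx]

/-- Among three intervals through a common point, one is covered by the other two. -/
lemma three_intervals {x : ℝ} {I J K : ℚ × ℚ} (hI : x ∈ qI I) (hJ : x ∈ qI J) (hK : x ∈ qI K) :
    qI I ⊆ qI J ∪ qI K ∨ qI J ⊆ qI I ∪ qI K ∨ qI K ⊆ qI I ∪ qI J := by
  have key : ∀ A B C : ℚ × ℚ, x ∈ qI A → x ∈ qI B → x ∈ qI C →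
      ((B.1 : ℝ) ≤ A.1 ∨ (C.1 : ℝ) ≤ A.1) → ((A.2 : ℝ) ≤ B.2 ∨ (A.2 : ℝ) ≤ C.2) →
      qI A ⊆ qI B ∪ qI C := by
    intro A B C hA hB hC h1 h2 y hy
    simp only [qI, Set.mem_Ioo, Set.mem_union] at *
    rcases le_total y x with h | h
    · rcases h1 with h1 | h1
      · left; constructor <;> linarith
      · right; constructor <;> linarith
    · rcases h2 with h2 | h2
      · left; constructor <;> linarith
      · right; constructor <;> linarith
  have k1 := key I J K hI hJ hK
  have k2 := key J I K hJ hI hK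
  have k3 := key K I J hK hI hJ
  rcases le_total (I.1 : ℝ) J.1 with a | a <;> rcases le_total (J.1 : ℝ) K.1 with b | b <;>
  rcases le_total (I.1 : ℝ) K.1 with c | c <;> rcases le_total (I.2 : ℝ) J.2 with a' | a' <;>
  rcases le_total (J.2 : ℝ) K.2 with b' | b' <;> rcases le_total (I.2 : ℝ) K.2 with c' | c' <;>
  simp only [a, b, c, a', b', c', true_or, or_true, forall_true_left] at k1 k2 k3 <;>
  tauto

/-- A finite family of intervals has a subfamily with the same union covering no point more than
twice: take a subfamily of least cardinality. -/
lemma exists_subcover (T : Finset (ℚ × ℚ)) :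
    ∃ T' ⊆ T, (⋃ I ∈ T', qI I) = (⋃ I ∈ T, qI I) ∧
      ∀ x : ℝ, ∑ I ∈ T', (qI I).indicator (fun _ => (1 : ℝ≥0∞)) x ≤ 2 := by
  classical
  obtain ⟨T', hT', hmin⟩ := Finset.exists_min_image
    (T.powerset.filter fun S => (⋃ I ∈ S, qI I) = (⋃ I ∈ T, qI I)) Finset.card
    ⟨T, by simp⟩
  simp only [Finset.mem_filter, Finset.mem_powerset] at hT' hmin
  refine ⟨T', hT'.1, hT'.2, fun x => ?_⟩
  have h1 : ∑ I ∈ T', (qI I).indicator (fun _ => (1 : ℝ≥0∞)) x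
      = ((T'.filter fun I => x ∈ qI I).card : ℝ≥0∞) := by
    simp [Set.indicator_apply]
  rw [h1]
  by_contra! hcon
  have h2 : 2 < (T'.filter fun I => x ∈ qI I).card := by exact_mod_cast hcon
  obtain ⟨I, hI, J, hJ, K, hK, hIJ, hIK, hJK⟩ := Finset.two_lt_card.mp h2
  simp only [Finset.mem_filter] at hI hJ hK
  have key : ∀ A B C : ℚ × ℚ, A ∈ T' → B ∈ T' → C ∈ T' → A ≠ B → A ≠ C →
      ¬ (qI A ⊆ qI B ∪ qI C) := by
    intro A B C hA hB hC hAB hAC hsub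
    have := hmin (T'.erase A) ⟨(Finset.erase_subset _ _).trans hT'.1, by
      rw [← hT'.2]
      apply Set.Subset.antisymm
      · exact Set.biUnion_subset_biUnion_left (Finset.erase_subset _ _)
      · refine Set.iUnion₂_subset fun D hD y hy => ?_
        by_cases hDA : D = A
        · subst hDA
          rcases hsub hy with h | h
          · exact Set.mem_biUnion (Finset.mem_erase.mpr ⟨hAB.symm, hB⟩) h
          · exact Set.mem_biUnion (Finset.mem_erase.mpr ⟨hAC.symm, hC⟩) h
        · exact Set.mem_biUnion (Finset.mem_erase.mpr ⟨hDA, hD⟩) hy⟩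
    have h3 := Finset.card_erase_lt_of_mem hA
    omega
  rcases three_intervals hI.2 hJ.2 hK.2 with h | h | h
  · exact key I J K hI.1 hJ.1 hK.1 hIJ hIK h
  · exact key J I K hJ.1 hI.1 hK.1 hIJ.symm hJK h
  · exact key K I J hK.1 hI.1 hJ.1 hIK.symm hJK.symm h

/-- Weak type `(1,1)` for an arbitrary measure. -/
lemma maxFun_weak (μ : Measure ℝ) {f : ℝ → ℝ≥0∞} (hf : Measurable f) (c : ℝ≥0∞) :
    c * μ {x | c < maxFun μ f x} ≤ 2 * ∫⁻ x, f x ∂μ := by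
  classical
  set A : Finset (ℚ × ℚ) → Set ℝ := fun T => ⋃ I ∈ T.filter (fun I => c < avg μ f I), qI I
  have hE : {x | c < maxFun μ f x} = ⋃ T, A T := by
    ext x
    simp only [Set.mem_ofPred_eq, lt_maxFun_iff, A, Set.mem_iUnion, Finset.mem_filter]
    constructor
    · rintro ⟨I, h1, h2⟩
      exact ⟨{I}, I, ⟨by simp, h2⟩, h1⟩
    · rintro ⟨T, I, ⟨_, h2⟩, h1⟩
      exact ⟨I, h1, h2⟩
  have hdir : Directed (· ⊆ ·) A := by
    refine Monotone.directed_le (fun S T hST => ?_)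
    exact Set.biUnion_subset_biUnion_left (Finset.filter_subset_filter _ hST)
  rw [hE, hdir.measure_iUnion, ENNReal.mul_iSup]
  refine iSup_le fun T => ?_
  obtain ⟨T', hT', hU, hcard⟩ := exists_subcover (T.filter (fun I => c < avg μ f I))
  have h1 : A T = ⋃ I ∈ T', qI I := hU.symm
  calc c * μ (A T) ≤ c * ∑ I ∈ T', μ (qI I) := by
        rw [h1]; gcongr; exact measure_biUnion_finset_le _ _
    _ = ∑ I ∈ T', c * μ (qI I) := Finset.mul_sum _ _ _
    _ ≤ ∑ I ∈ T', ∫⁻ x in qI I, f x ∂μ := by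
        refine Finset.sum_le_sum fun I hI => ENNReal.mul_le_of_le_div ?_
        exact (Finset.mem_filter.mp (hT' hI)).2.le
    _ = ∑ I ∈ T', ∫⁻ x, (qI I).indicator (fun _ => (1 : ℝ≥0∞)) x * f x ∂μ := by
        refine Finset.sum_congr rfl fun I _ => ?_
        rw [← lintegral_indicator (measurableSet_qI I)]
        congr 1; ext x
        by_cases hx : x ∈ qI I <;> simp [hx]
    _ = ∫⁻ x, (∑ I ∈ T', (qI I).indicator (fun _ => (1 : ℝ≥0∞)) x) * f x ∂μ := by
        rw [← lintegral_finsetSum]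
        · simp_rw [Finset.sum_mul]
        · intro I _
          exact (measurable_const.indicator (measurableSet_qI I)).mul hf
    _ ≤ ∫⁻ x, 2 * f x ∂μ := by
        gcongr with x; exact hcard x
    _ = 2 * ∫⁻ x, f x ∂μ := lintegral_const_mul _ hf

/-- The weak type inequality localized to the set where `f` is large. -/
lemma maxFun_weak' (μ : Measure ℝ) {f : ℝ → ℝ≥0∞} (hf : Measurable f) (c : ℝ≥0∞) :
    c * μ {x | c < maxFun μ f x} ≤ 4 * ∫⁻ x, (if c < 2 * f x then f x else 0) ∂μ := by
  set g : ℝ → ℝ≥0∞ := fun x => if c < 2 * f x then f x else 0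
  have hg : Measurable g :=
    Measurable.ite (measurableSet_lt measurable_const (hf.const_mul 2)) hf measurable_const
  have h1 : ∀ x, f x ≤ c / 2 + g x := by
    intro x
    by_cases h : c < 2 * f x
    · simp [g, h]
    · have : f x ≤ c / 2 := by
        rw [ENNReal.le_div_iff_mul_le (by simp) (by simp), mul_comm]; exact not_lt.mp h
      exact this.trans le_self_add
  have h2 : ∀ x, maxFun μ f x ≤ c / 2 + maxFun μ g x := by
    intro x
    refine maxFun_le fun I hI => ?_
    rw [avg]
    calc (∫⁻ y in qI I, f y ∂μ) / μ (qI I)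
        ≤ (∫⁻ y in qI I, (c / 2 + g y) ∂μ) / μ (qI I) := by gcongr with y; exact h1 y
      _ = (c / 2 * μ (qI I)) / μ (qI I) + (∫⁻ y in qI I, g y ∂μ) / μ (qI I) := by
        rw [lintegral_add_right _ hg, ENNReal.add_div]; simp
      _ ≤ _ := by
        exact add_le_add (ENNReal.div_le_of_le_mul le_rfl) (avg_le_maxFun μ g hI)
  have h3 : {x | c < maxFun μ f x} ⊆ {x | c / 2 < maxFun μ g x} := by
    intro x hx
    simp only [Set.mem_ofPred_eq] at hx ⊢
    by_contra! hcon
    have : maxFun μ f x ≤ c := (h2 x).trans ((add_le_add le_rfl hcon).trans_eq (ENNReal.add_halves c))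
    exact absurd hx (not_lt.mpr this)
  calc c * μ {x | c < maxFun μ f x} ≤ c * μ {x | c / 2 < maxFun μ g x} := by gcongr
    _ = 2 * (c / 2 * μ {x | c / 2 < maxFun μ g x}) := by
        rw [← mul_assoc, ENNReal.mul_div_cancel (by simp) (by simp)]
    _ ≤ 2 * (2 * ∫⁻ x, g x ∂μ) := mul_le_mul' le_rfl (maxFun_weak μ hg _)
    _ = _ := by rw [← mul_assoc]; norm_num

/-- The layer cake formula for the power `y ^ a`. -/
lemma layer (a : ℝ) (ha : 0 < a) (y : ℝ≥0∞) :
    ∫⁻ t in Set.Ioi (0 : ℝ), (if ENNReal.ofReal t < y then ENNReal.ofReal (t ^ (a - 1)) else 0)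
      = y ^ a / ENNReal.ofReal a := by
  have fin : ∀ y : ℝ, 0 ≤ y → ∫⁻ t in Set.Ioi (0 : ℝ),
      (if ENNReal.ofReal t < ENNReal.ofReal y then ENNReal.ofReal (t ^ (a - 1)) else 0)
      = (ENNReal.ofReal y) ^ a / ENNReal.ofReal a := by
    intro y hy
    have e1 : ∫⁻ t in Set.Ioi (0 : ℝ),
      (if ENNReal.ofReal t < ENNReal.ofReal y then ENNReal.ofReal (t ^ (a - 1)) else 0)
       = ∫⁻ t in Set.Ioo 0 y, ENNReal.ofReal (t ^ (a - 1)) := by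
      rw [← lintegral_indicator measurableSet_Ioi, ← lintegral_indicator measurableSet_Ioo]
      congr 1; ext t
      simp only [Set.indicator_apply, Set.mem_Ioi, Set.mem_Ioo]
      by_cases h0 : 0 < t
      · by_cases h1 : t < y
        · simp [h0, h1, ENNReal.ofReal_lt_ofReal_iff (h0.trans h1)]
        · have : ¬ ENNReal.ofReal t < ENNReal.ofReal y := by
            rw [not_lt] at h1 ⊢; exact ENNReal.ofReal_le_ofReal h1
          simp [h1, this]
      · simp [h0]
    have hint : IntervalIntegrable (fun t : ℝ => t ^ (a - 1)) volume 0 y :=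
      intervalIntegral.intervalIntegrable_rpow' (by linarith)
    rw [e1, restrict_Ioo_eq_restrict_Ioc, ← ofReal_integral_eq_lintegral_ofReal]
    · rw [← intervalIntegral.integral_of_le hy, integral_rpow (Or.inl (by linarith))]
      simp only [sub_add_cancel]
      rw [Real.zero_rpow ha.ne', sub_zero, ENNReal.ofReal_div_of_pos ha,
        ENNReal.ofReal_rpow_of_nonneg hy ha.le]
    · exact (intervalIntegrable_iff_integrableOn_Ioc_of_le hy).mp hint
    · refine (ae_restrict_iff' measurableSet_Ioc).mpr (Filter.Eventually.of_forall fun t ht => ?_)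
      exact Real.rpow_nonneg ht.1.le _
  by_cases hy : y = ∞
  · subst hy
    have hR : (∞ : ℝ≥0∞) ^ a / ENNReal.ofReal a = ∞ := by
      rw [ENNReal.top_rpow_of_pos ha, ENNReal.top_div_of_ne_top ENNReal.ofReal_ne_top]
    rw [hR]
    refine ENNReal.eq_top_of_forall_nnreal_le ?_
    intro r
    obtain ⟨z, hz0, hz⟩ : ∃ z : ℝ, 0 ≤ z ∧ (r : ℝ≥0∞) = (ENNReal.ofReal z) ^ a / ENNReal.ofReal a := by
      refine ⟨(r * a) ^ (1 / a), by positivity, ?_⟩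
      rw [ENNReal.ofReal_rpow_of_nonneg (by positivity) ha.le, ← Real.rpow_mul (by positivity),
        one_div_mul_cancel ha.ne', Real.rpow_one, ← ENNReal.ofReal_div_of_pos ha,
        mul_div_cancel_right₀ _ ha.ne', ENNReal.ofReal_coe_nnreal]
    rw [hz, ← fin z hz0]
    refine lintegral_mono fun t => ?_
    simp only [ENNReal.ofReal_lt_top, if_true]
    split_ifs <;> simp
  · have := fin y.toReal ENNReal.toReal_nonneg
    rwa [ENNReal.ofReal_toReal hy] at this

/-- The `L^p` constant of `maxFun μ`, the same for all measures. -/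
noncomputable def CM (p : ℝ) : ℝ≥0∞ :=
  ENNReal.ofReal p * 4 * (2 ^ (p - 1) / ENNReal.ofReal (p - 1))

lemma CM_ne_top {p : ℝ} (hp : 1 < p) : CM p ≠ ∞ := by
  unfold CM
  refine ENNReal.mul_ne_top (by finiteness) (ENNReal.div_ne_top ?_ ?_)
  · exact ENNReal.rpow_ne_top_of_nonneg (by linarith) (by simp)
  · simp [hp]

/-- The Marcinkiewicz argument: integrate the localized weak type inequality over all levels. -/
lemma maxFun_strong (μ : Measure ℝ) [SFinite μ] {p : ℝ} (hp : 1 < p) {f : ℝ → ℝ≥0∞}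
    (hf : Measurable f) :
    ∫⁻ x, (maxFun μ f x) ^ p ∂μ ≤ CM p * ∫⁻ x, (f x) ^ p ∂μ := by
  have hp0 : 0 < p := by linarith
  have hM := measurable_maxFun μ f
  have hpt : ENNReal.ofReal p ≠ 0 := by simp [hp0]
  have m1 : Measurable (Function.uncurry fun (x t : ℝ) =>
      (if ENNReal.ofReal t < maxFun μ f x then ENNReal.ofReal (t ^ (p - 1)) else 0)) := by
    refine Measurable.ite (measurableSet_lt (by fun_prop) (hM.comp measurable_fst)) ?_ (by fun_prop)
    fun_prop
  have m2 : Measurable (Function.uncurry fun (t x : ℝ) =>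
      ENNReal.ofReal (t ^ (p - 2)) * (if ENNReal.ofReal t < 2 * f x then f x else 0)) := by
    refine Measurable.mul (by fun_prop) ?_
    refine Measurable.ite (measurableSet_lt (by fun_prop) ?_) (hf.comp measurable_snd) (by fun_prop)
    exact (hf.comp measurable_snd).const_mul 2
  calc ∫⁻ x, (maxFun μ f x) ^ p ∂μ
      = ∫⁻ x, ENNReal.ofReal p * (∫⁻ t in Set.Ioi (0 : ℝ),
        (if ENNReal.ofReal t < maxFun μ f x then ENNReal.ofReal (t ^ (p - 1)) else 0)) ∂μ := by
        congr 1; ext x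
        rw [layer p hp0, ENNReal.mul_div_cancel hpt ENNReal.ofReal_ne_top]
    _ = ENNReal.ofReal p * ∫⁻ x, (∫⁻ t in Set.Ioi (0 : ℝ),
        (if ENNReal.ofReal t < maxFun μ f x then ENNReal.ofReal (t ^ (p - 1)) else 0)) ∂μ := by
        exact lintegral_const_mul _ (m1.lintegral_prod_right' (ν := volume.restrict (Set.Ioi 0)))
    _ = ENNReal.ofReal p * ∫⁻ t in Set.Ioi (0 : ℝ), ∫⁻ x,
        (if ENNReal.ofReal t < maxFun μ f x then ENNReal.ofReal (t ^ (p - 1)) else 0) ∂μ := by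
        rw [lintegral_lintegral_swap m1.aemeasurable]
    _ ≤ ENNReal.ofReal p * ∫⁻ t in Set.Ioi (0 : ℝ), 4 * ∫⁻ x,
        ENNReal.ofReal (t ^ (p - 2)) * (if ENNReal.ofReal t < 2 * f x then f x else 0) ∂μ := by
        gcongr ENNReal.ofReal p * ?_
        refine setLIntegral_mono' measurableSet_Ioi fun t ht => ?_
        have ht : 0 < t := ht
        have e1 : ∫⁻ x, (if ENNReal.ofReal t < maxFun μ f x then ENNReal.ofReal (t ^ (p - 1)) else 0) ∂μ
          = ENNReal.ofReal (t ^ (p - 1)) * μ {x | ENNReal.ofReal t < maxFun μ f x} := by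
          rw [← lintegral_indicator_const (measurableSet_lt measurable_const hM)]
          simp only [Set.indicator_apply, Set.mem_ofPred_eq]
        rw [e1, lintegral_const_mul _ (Measurable.ite (measurableSet_lt measurable_const
          (hf.const_mul 2)) hf measurable_const)]
        have e2 : t ^ (p - 1) = t ^ (p - 2) * t := by
          rw [← Real.rpow_add_one ht.ne']; congr 1; ring
        rw [e2, ENNReal.ofReal_mul (by positivity), mul_assoc, mul_left_comm 4]
        exact mul_le_mul' le_rfl (maxFun_weak' μ hf _)
    _ = ENNReal.ofReal p * 4 * ∫⁻ x, f x * (∫⁻ t in Set.Ioi (0 : ℝ),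
        (if ENNReal.ofReal t < 2 * f x then ENNReal.ofReal (t ^ (p - 1 - 1)) else 0)) ∂μ := by
        have e3 := lintegral_const_mul (μ := volume.restrict (Set.Ioi 0)) 4
          (m2.lintegral_prod_right' (ν := μ))
        simp only [Function.uncurry_apply_pair] at e3
        rw [e3, lintegral_lintegral_swap m2.aemeasurable, mul_assoc]
        congr 3; ext x
        rw [← lintegral_const_mul _ (Measurable.ite (measurableSet_lt (by fun_prop) measurable_const)
          (by fun_prop) measurable_const)]
        congr 1; ext t
        rw [show p - 1 - 1 = p - 2 by ring]
        split_ifs <;> simp [mul_comm]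
    _ = CM p * ∫⁻ x, (f x) ^ p ∂μ := by
        have e4 : ∀ x, f x * (∫⁻ t in Set.Ioi (0 : ℝ),
            (if ENNReal.ofReal t < 2 * f x then ENNReal.ofReal (t ^ (p - 1 - 1)) else 0))
            = 2 ^ (p - 1) / ENNReal.ofReal (p - 1) * f x ^ p := by
          intro x
          rw [layer (p - 1) (by linarith), ENNReal.mul_rpow_of_nonneg _ _ (by linarith)]
          have : f x ^ p = f x * f x ^ (p - 1) := by
            conv_lhs => rw [show p = 1 + (p - 1) by ring,
              ENNReal.rpow_add_of_nonneg _ _ (by norm_num) (by linarith), ENNReal.rpow_one]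
          rw [this, div_eq_mul_inv, div_eq_mul_inv]
          ring
        simp_rw [e4]
        rw [lintegral_const_mul _ (by fun_prop), ← mul_assoc, CM]

/-! ### Muckenhoupt weights -/

/-- `w` is a Muckenhoupt `A_p` weight with constant `K` (tested on rational intervals). -/
structure IsAp (p : ℝ) (K : ℝ≥0∞) (w : ℝ → ℝ≥0∞) : Prop where
  meas : Measurable w
  ne_zero : ∀ᵐ x, w x ≠ 0
  ne_top : ∀ᵐ x, w x ≠ ∞
  bound : ∀ I : ℚ × ℚ, (∫⁻ x in qI I, w x) * (∫⁻ x in qI I, w x ^ (-1 / (p - 1))) ^ (p - 1)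
    ≤ K * volume (qI I) ^ p

/-- `u` is a Muckenhoupt `A_1` weight with constant `K`; the inequality `M u ≤ K u` is required at
every point. -/
structure IsA1 (K : ℝ≥0∞) (u : ℝ → ℝ≥0∞) : Prop where
  meas : Measurable u
  ne_zero : ∀ᵐ x, u x ≠ 0
  ne_top : ∀ᵐ x, u x ≠ ∞
  bound : ∀ x, maxFun volume u x ≤ K * u x

lemma volume_qI_ne_zero {I : ℚ × ℚ} {x : ℝ} (hx : x ∈ qI I) : volume (qI I) ≠ 0 := by
  simp only [qI, Set.mem_Ioo] at hx
  simp only [qI, Real.volume_Ioo, ne_eq, ENNReal.ofReal_eq_zero, not_le]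
  linarith [hx.1, hx.2]

lemma volume_qI_ne_top (I : ℚ × ℚ) : volume (qI I) ≠ ∞ := by
  simp [qI, Real.volume_Ioo]

lemma setLIntegral_qI_ne_zero {w : ℝ → ℝ≥0∞} (hw : Measurable w) (h0 : ∀ᵐ x, w x ≠ 0)
    {I : ℚ × ℚ} {x : ℝ} (hx : x ∈ qI I) : ∫⁻ y in qI I, w y ≠ 0 := by
  rw [← withDensity_apply _ (measurableSet_qI I)]
  intro h
  exact volume_qI_ne_zero hx (withDensity_absolutelyContinuous' hw.aemeasurable h0 h)

lemma rpow_ne_zero' {x : ℝ≥0∞} (h0 : x ≠ 0) (ht : x ≠ ∞) (a : ℝ) : x ^ a ≠ 0 := by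
  simp [ENNReal.rpow_eq_zero_iff, h0, ht]

lemma rpow_ne_top' {x : ℝ≥0∞} (h0 : x ≠ 0) (ht : x ≠ ∞) (a : ℝ) : x ^ a ≠ ∞ := by
  simp [ENNReal.rpow_eq_top_iff, h0, ht]

lemma rpow_cancel {x : ℝ≥0∞} (h0 : x ≠ 0) (ht : x ≠ ∞) (a : ℝ) : x ^ a * x ^ (-a) = 1 := by
  rw [← ENNReal.rpow_add _ _ h0 ht, add_neg_cancel, ENNReal.rpow_zero]

namespace IsAp

variable {p : ℝ} {K : ℝ≥0∞} {w : ℝ → ℝ≥0∞}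

/-- The dual weight `w ^ (1 - p')` of an `A_p` weight is an `A_{p'}` weight. -/
lemma dual (hp : 1 < p) (hw : IsAp p K w) :
    IsAp (p / (p - 1)) (K ^ (1 / (p - 1))) (fun x => w x ^ (-1 / (p - 1))) := by
  have h1 : 0 < p - 1 := by linarith
  have e1 : p / (p - 1) - 1 = 1 / (p - 1) := by field_simp; ring
  refine ⟨hw.meas.pow_const _, ?_, ?_, fun I => ?_⟩
  · filter_upwards [hw.ne_zero, hw.ne_top] with x h0 ht using rpow_ne_zero' h0 ht _
  · filter_upwards [hw.ne_zero, hw.ne_top] with x h0 ht using rpow_ne_top' h0 ht _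
  · have e2 : ∀ x, (w x ^ (-1 / (p - 1))) ^ (-1 / (p / (p - 1) - 1)) = w x := by
      intro x
      rw [← ENNReal.rpow_mul, e1]
      have : -1 / (p - 1) * (-1 / (1 / (p - 1))) = 1 := by field_simp
      rw [this, ENNReal.rpow_one]
    simp_rw [e2]
    rw [e1]
    have := ENNReal.rpow_le_rpow (hw.bound I) (z := 1 / (p - 1)) (by positivity)
    rw [ENNReal.mul_rpow_of_nonneg _ _ (by positivity), ENNReal.mul_rpow_of_nonneg _ _ (by positivity),
      ← ENNReal.rpow_mul, ← ENNReal.rpow_mul, mul_one_div_cancel h1.ne', ENNReal.rpow_one,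
      mul_one_div] at this
    rwa [mul_comm]

/-- The bound of the maximal operator on `L^p(w)`, in terms of `p` and the `A_p` constant. -/
noncomputable def _root_.BM (p : ℝ) (K : ℝ≥0∞) : ℝ≥0∞ :=
  K ^ (p / (p - 1)) * (CM (p / (p - 1)) * CM p)

lemma _root_.BM_ne_top (hp : 1 < p) (hK : K ≠ ∞) : BM p K ≠ ∞ := by
  have h1 : 0 < p - 1 := by linarith
  have h2 : 1 < p / (p - 1) := by rw [lt_div_iff₀ h1]; linarith
  exact ENNReal.mul_ne_top (ENNReal.rpow_ne_top_of_nonneg (by positivity) hK)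
    (ENNReal.mul_ne_top (CM_ne_top h2) (CM_ne_top hp))

/-- The pointwise bound behind Muckenhoupt's theorem: with `σ` the dual weight,
`(M f) ^ (p - 1) ≤ K M_w ((M_σ (f / σ)) ^ (p - 1) / w)`. -/
lemma pointwise (hp : 1 < p) (hK : K ≠ ∞) (hw : IsAp p K w) {f : ℝ → ℝ≥0∞} (hf : Measurable f)
    (x : ℝ) :
    (maxFun volume f x) ^ (p - 1) ≤ K * maxFun (volume.withDensity w)
      (fun y => (maxFun (volume.withDensity fun x => w x ^ (-1 / (p - 1)))
        (fun z => f z / w z ^ (-1 / (p - 1))) y) ^ (p - 1) / w y) x := by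
  have h1 : 0 < p - 1 := by linarith
  set σ : ℝ → ℝ≥0∞ := fun x => w x ^ (-1 / (p - 1)) with hσ
  have mσ : Measurable σ := hw.meas.pow_const _
  have σ0 : ∀ᵐ x, σ x ≠ 0 := (hw.dual hp).ne_zero
  have σt : ∀ᵐ x, σ x ≠ ∞ := (hw.dual hp).ne_top
  set φ : ℝ → ℝ≥0∞ := fun z => f z / σ z
  have mφ : Measurable φ := hf.div mσ
  set Φ : ℝ → ℝ≥0∞ := fun y => (maxFun (volume.withDensity σ) φ y) ^ (p - 1)
  have mΦ : Measurable Φ := (measurable_maxFun _ _).pow_const _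
  have mψ : Measurable (fun y => Φ y / w y) := mΦ.div hw.meas
  suffices h : maxFun volume f x ≤
      (K * maxFun (volume.withDensity w) (fun y => Φ y / w y) x) ^ (1 / (p - 1)) by
    have := ENNReal.rpow_le_rpow h h1.le
    rwa [← ENNReal.rpow_mul, one_div_mul_cancel h1.ne', ENNReal.rpow_one] at this
  refine maxFun_le fun I hI => ?_
  suffices h : avg volume f I ^ (p - 1) ≤ K * maxFun (volume.withDensity w) (fun y => Φ y / w y) x by
    have := ENNReal.rpow_le_rpow h (z := 1 / (p - 1)) (by positivity)
    rwa [← ENNReal.rpow_mul, mul_one_div_cancel h1.ne', ENNReal.rpow_one] at this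
  have V0 := volume_qI_ne_zero hI
  have Vt := volume_qI_ne_top I
  set V := volume (qI I)
  set W := ∫⁻ x in qI I, w x with hW
  set S := ∫⁻ x in qI I, σ x with hS
  have hWS : W * S ^ (p - 1) ≤ K * V ^ p := hw.bound I
  have W0 : W ≠ 0 := setLIntegral_qI_ne_zero hw.meas hw.ne_zero hI
  have S0 : S ≠ 0 := setLIntegral_qI_ne_zero mσ σ0 hI
  have hfin : K * V ^ p ≠ ∞ :=
    ENNReal.mul_ne_top hK (ENNReal.rpow_ne_top_of_nonneg (by linarith) Vt)
  have Wt : W ≠ ∞ := by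
    intro h
    rw [h, ENNReal.top_mul] at hWS
    · exact hfin (top_le_iff.mp hWS)
    · rw [ne_eq, ENNReal.rpow_eq_zero_iff]; push Not
      exact ⟨fun h => absurd h S0, fun _ => h1.le⟩
  have St : S ≠ ∞ := by
    intro h
    rw [h, ENNReal.top_rpow_of_pos h1, ENNReal.mul_top W0] at hWS
    exact hfin (top_le_iff.mp hWS)
  have wW : volume.withDensity w (qI I) = W := withDensity_apply _ (measurableSet_qI I)
  have wS : volume.withDensity σ (qI I) = S := withDensity_apply _ (measurableSet_qI I)
  set c := avg (volume.withDensity σ) φ I with hc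
  -- `∫_I f = c σ(I)`
  have f1 : ∫⁻ y in qI I, f y = c * S := by
    rw [hc, avg, wS, ENNReal.div_mul_cancel S0 St,
      setLIntegral_withDensity_eq_setLIntegral_mul _ mσ mφ (measurableSet_qI I)]
    refine lintegral_congr_ae (ae_restrict_of_ae ?_)
    filter_upwards [σ0, σt] with y h0 ht
    simp [φ, ENNReal.mul_div_cancel h0 ht]
  set N := maxFun (volume.withDensity w) (fun y => Φ y / w y) x
  have f2 : c ^ (p - 1) * V ≤ W * N := by
    calc c ^ (p - 1) * V = ∫⁻ y in qI I, c ^ (p - 1) := by simp [V]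
      _ ≤ ∫⁻ y in qI I, Φ y := by
        refine setLIntegral_mono' (measurableSet_qI I) fun y hy => ?_
        exact ENNReal.rpow_le_rpow (avg_le_maxFun _ _ hy) h1.le
      _ = ∫⁻ y in qI I, Φ y / w y ∂(volume.withDensity w) := by
        rw [setLIntegral_withDensity_eq_setLIntegral_mul _ hw.meas mψ
          (measurableSet_qI I)]
        refine lintegral_congr_ae (ae_restrict_of_ae ?_)
        filter_upwards [hw.ne_zero, hw.ne_top] with y h0 ht
        simp [ENNReal.mul_div_cancel h0 ht]
      _ = W * avg (volume.withDensity w) (fun y => Φ y / w y) I := by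
        rw [avg, wW, ENNReal.mul_div_cancel W0 Wt]
      _ ≤ W * N := by gcongr; exact avg_le_maxFun _ _ hI
  have f3 : (∫⁻ y in qI I, f y) ^ (p - 1) * V ≤ K * V ^ p * N := by
    calc (∫⁻ y in qI I, f y) ^ (p - 1) * V = S ^ (p - 1) * (c ^ (p - 1) * V) := by
          rw [f1, ENNReal.mul_rpow_of_nonneg _ _ h1.le]; ring
      _ ≤ S ^ (p - 1) * (W * N) := by gcongr
      _ = W * S ^ (p - 1) * N := by ring
      _ ≤ K * V ^ p * N := by gcongr
  rw [avg, ENNReal.div_rpow_of_nonneg _ _ h1.le]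
  refine ENNReal.div_le_of_le_mul ?_
  rw [← ENNReal.mul_le_mul_iff_left V0 Vt]
  refine f3.trans_eq ?_
  have : V ^ p = V ^ (p - 1) * V := by
    conv_rhs => rw [← ENNReal.rpow_one V, ← ENNReal.rpow_mul, one_mul,
      ← ENNReal.rpow_add _ _ V0 Vt, sub_add_cancel]
  rw [this]; ring

/-- Muckenhoupt's theorem. -/
lemma maxFun_bound (hp : 1 < p) (hK : K ≠ ∞) (hw : IsAp p K w) {f : ℝ → ℝ≥0∞}
    (hf : Measurable f) :
    ∫⁻ x, (maxFun volume f x) ^ p * w x ≤ BM p K * ∫⁻ x, f x ^ p * w x := by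
  have h1 : 0 < p - 1 := by linarith
  have hp' : 1 < p / (p - 1) := by rw [lt_div_iff₀ h1]; linarith
  set σ : ℝ → ℝ≥0∞ := fun x => w x ^ (-1 / (p - 1)) with hσ
  have mσ : Measurable σ := hw.meas.pow_const _
  set φ : ℝ → ℝ≥0∞ := fun z => f z / σ z
  have mφ : Measurable φ := hf.div mσ
  set Φ : ℝ → ℝ≥0∞ := fun y => (maxFun (volume.withDensity σ) φ y) ^ (p - 1)
  have mΦ : Measurable Φ := (measurable_maxFun _ _).pow_const _
  have mψ : Measurable (fun y => Φ y / w y) := mΦ.div hw.meas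
  have hmw := hw.meas
  have mN := measurable_maxFun (volume.withDensity w) (fun y => Φ y / w y)
  calc ∫⁻ x, (maxFun volume f x) ^ p * w x
      ≤ ∫⁻ x, K ^ (p / (p - 1)) * ((maxFun (volume.withDensity w) (fun y => Φ y / w y) x)
          ^ (p / (p - 1)) * w x) := by
        refine lintegral_mono fun x => ?_
        rw [← mul_assoc]
        gcongr
        have := ENNReal.rpow_le_rpow (hw.pointwise hp hK hf x) (z := p / (p - 1)) (by positivity)
        rwa [← ENNReal.rpow_mul, mul_div_cancel₀ _ h1.ne',
          ENNReal.mul_rpow_of_nonneg _ _ (by positivity)] at this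
    _ = K ^ (p / (p - 1)) * ∫⁻ x, (maxFun (volume.withDensity w) (fun y => Φ y / w y) x)
          ^ (p / (p - 1)) ∂(volume.withDensity w) := by
        rw [lintegral_const_mul _ (by fun_prop),
          lintegral_withDensity_eq_lintegral_mul _ hw.meas (mN.pow_const _)]
        simp [mul_comm]
    _ ≤ K ^ (p / (p - 1)) * (CM (p / (p - 1)) * ∫⁻ x, (Φ x / w x) ^ (p / (p - 1))
          ∂(volume.withDensity w)) := by
        gcongr; exact maxFun_strong _ hp' mψ
    _ = K ^ (p / (p - 1)) * (CM (p / (p - 1)) * ∫⁻ x, (maxFun (volume.withDensity σ) φ x) ^ p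
          ∂(volume.withDensity σ)) := by
        congr 2
        rw [lintegral_withDensity_eq_lintegral_mul _ hw.meas (mψ.pow_const _),
          lintegral_withDensity_eq_lintegral_mul _ mσ ((measurable_maxFun _ _).pow_const _)]
        refine lintegral_congr_ae ?_
        filter_upwards [hw.ne_zero, hw.ne_top] with x h0 ht
        simp only [Pi.mul_apply, Φ, hσ]
        rw [ENNReal.div_rpow_of_nonneg _ _ (by positivity), ← ENNReal.rpow_mul,
          mul_div_cancel₀ _ h1.ne', div_eq_mul_inv, ← ENNReal.rpow_neg, mul_left_comm, mul_comm]
        congr 1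
        nth_rewrite 1 [← ENNReal.rpow_one (w x)]
        rw [← ENNReal.rpow_add _ _ h0 ht]
        congr 1
        field_simp; ring
    _ ≤ K ^ (p / (p - 1)) * (CM (p / (p - 1)) * (CM p * ∫⁻ x, φ x ^ p
          ∂(volume.withDensity σ))) := by
        gcongr; exact maxFun_strong _ hp mφ
    _ = BM p K * ∫⁻ x, f x ^ p * w x := by
        rw [BM, mul_assoc, mul_assoc]
        congr 3
        rw [lintegral_withDensity_eq_lintegral_mul _ mσ (mφ.pow_const _)]
        refine lintegral_congr_ae ?_
        filter_upwards [hw.ne_zero, hw.ne_top] with x h0 ht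
        simp only [Pi.mul_apply, φ, hσ]
        rw [ENNReal.div_rpow_of_nonneg _ _ (by positivity), div_eq_mul_inv (_ ^ _), ← ENNReal.rpow_neg,
          ← ENNReal.rpow_mul, mul_left_comm, ← ENNReal.rpow_add _ _ h0 ht]
        congr 1
        nth_rewrite 2 [← ENNReal.rpow_one (w x)]
        congr 1
        field_simp; ring

end IsAp

namespace IsA1

lemma mono {K K' : ℝ≥0∞} {u : ℝ → ℝ≥0∞} (hu : IsA1 K u) (h : K ≤ K') : IsA1 K' u :=
  ⟨hu.meas, hu.ne_zero, hu.ne_top, fun x => (hu.bound x).trans (by gcongr)⟩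

lemma avg_ne {K : ℝ≥0∞} (hK : K ≠ ∞) {u : ℝ → ℝ≥0∞} (hu : IsA1 K u) {I : ℚ × ℚ} {x : ℝ}
    (hx : x ∈ qI I) : avg volume u I ≠ 0 ∧ avg volume u I ≠ ∞ := by
  constructor
  · exact (ENNReal.div_pos (setLIntegral_qI_ne_zero hu.meas hu.ne_zero hx) (volume_qI_ne_top I)).ne'
  · obtain ⟨y, hy, hyt⟩ : ∃ y ∈ qI I, u y ≠ ∞ := by
      by_contra! hcon
      refine volume_qI_ne_zero hx (measure_mono_null (fun y hy => ?_) hu.ne_top)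
      simpa using hcon y hy
    exact ne_top_of_le_ne_top (ENNReal.mul_ne_top hK hyt)
      ((avg_le_maxFun _ _ hy).trans (hu.bound y))

/-- The easy half of the factorization of `A_s` weights. -/
lemma isAp {s : ℝ} (hs : 1 < s) {K : ℝ≥0∞} (hK1 : 1 ≤ K) (hK : K ≠ ∞) {u v : ℝ → ℝ≥0∞}
    (hu : IsA1 K u) (hv : IsA1 K v) : IsAp s (K ^ s) (fun x => u x * v x ^ (1 - s)) := by
  have h1 : 0 < s - 1 := by linarith
  have K0 : K ≠ 0 := (zero_lt_one.trans_le hK1).ne'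
  refine ⟨hu.meas.mul (hv.meas.pow_const _), ?_, ?_, fun I => ?_⟩
  · filter_upwards [hu.ne_zero, hv.ne_zero, hv.ne_top] with x a b c
    exact mul_ne_zero a (rpow_ne_zero' b c _)
  · filter_upwards [hu.ne_top, hv.ne_zero, hv.ne_top] with x a b c
    exact ENNReal.mul_ne_top a (rpow_ne_top' b c _)
  · by_cases hI : ∃ x, x ∈ qI I
    swap
    · have : qI I = ∅ := by
        ext x; simp only [Set.mem_empty_iff_false, iff_false]; exact fun h => hI ⟨x, h⟩
      simp [this]
    obtain ⟨x, hx⟩ := hI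
    obtain ⟨a0, at'⟩ := hu.avg_ne hK hx
    obtain ⟨b0, bt⟩ := hv.avg_ne hK hx
    set α := avg volume u I with hα
    set β := avg volume v I with hβ
    have V0 := volume_qI_ne_zero hx
    have Vt := volume_qI_ne_top I
    set V := volume (qI I)
    have eu : ∫⁻ x in qI I, u x = α * V := by rw [hα, avg, ENNReal.div_mul_cancel V0 Vt]
    have ev : ∫⁻ x in qI I, v x = β * V := by rw [hβ, avg, ENNReal.div_mul_cancel V0 Vt]
    have lu : ∀ y ∈ qI I, α / K ≤ u y := fun y hy =>
      ENNReal.div_le_of_le_mul' ((avg_le_maxFun _ _ hy).trans (hu.bound y))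
    have lv : ∀ y ∈ qI I, β / K ≤ v y := fun y hy =>
      ENNReal.div_le_of_le_mul' ((avg_le_maxFun _ _ hy).trans (hv.bound y))
    have A0 : α / K ≠ 0 := (ENNReal.div_pos a0 hK).ne'
    have At : α / K ≠ ∞ := ENNReal.div_ne_top at' K0
    have B0 : β / K ≠ 0 := (ENNReal.div_pos b0 hK).ne'
    have Bt : β / K ≠ ∞ := ENNReal.div_ne_top bt K0
    have anti : ∀ {a b : ℝ≥0∞} {t : ℝ}, 0 ≤ t → a ≤ b → b ^ (-t) ≤ a ^ (-t) := by
      intro a b t ht hab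
      rw [ENNReal.rpow_neg, ENNReal.rpow_neg, ENNReal.inv_le_inv]
      exact ENNReal.rpow_le_rpow hab ht
    have i1 : ∫⁻ x in qI I, u x * v x ^ (1 - s) ≤ α * V * (β / K) ^ (1 - s) := by
      rw [← eu, ← lintegral_mul_const _ hu.meas]
      refine setLIntegral_mono' (measurableSet_qI I) fun y hy => ?_
      rw [show 1 - s = -(s - 1) by ring]
      gcongr u y * ?_
      exact anti h1.le (lv y hy)
    have i2 : ∫⁻ x in qI I, (u x * v x ^ (1 - s)) ^ (-1 / (s - 1))
        ≤ β * V * (α / K) ^ (-1 / (s - 1)) := by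
      rw [← ev, ← lintegral_mul_const _ hv.meas]
      refine lintegral_mono_ae ?_
      refine (ae_restrict_iff' (measurableSet_qI I)).mpr ?_
      filter_upwards [hu.ne_zero, hu.ne_top, hv.ne_zero, hv.ne_top] with y u0 ut v0 vt hy
      rw [ENNReal.mul_rpow_of_ne_zero u0 (rpow_ne_zero' v0 vt _), ← ENNReal.rpow_mul,
        show (1 - s) * (-1 / (s - 1)) = 1 by field_simp; ring, ENNReal.rpow_one, mul_comm]
      gcongr v y * ?_
      rw [neg_div]
      exact anti (by positivity) (lu y hy)
    calc _ ≤ (α * V * (β / K) ^ (1 - s)) * (β * V * (α / K) ^ (-1 / (s - 1))) ^ (s - 1) := by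
          gcongr
      _ = K ^ s * V ^ s := by
          rw [ENNReal.mul_rpow_of_nonneg _ _ h1.le, ENNReal.mul_rpow_of_nonneg _ _ h1.le,
            ← ENNReal.rpow_mul, div_mul_cancel₀ _ h1.ne', ENNReal.rpow_neg_one]
          have eα : α = K * (α / K) := (ENNReal.mul_div_cancel K0 hK).symm
          have eβ : β = K * (β / K) := (ENNReal.mul_div_cancel K0 hK).symm
          set A := α / K
          set B := β / K
          rw [eα, eβ, ENNReal.mul_rpow_of_nonneg _ _ h1.le]
          have c1 : A * A⁻¹ = 1 := ENNReal.mul_inv_cancel A0 At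
          have c2 : B ^ (s - 1) * B ^ (1 - s) = 1 := by
            rw [show 1 - s = -(s - 1) by ring]; exact rpow_cancel B0 Bt _
          have c3 : ∀ {X : ℝ≥0∞}, X ≠ 0 → X ≠ ∞ → X ^ s = X * X ^ (s - 1) := by
            intro X X0 Xt
            conv_rhs => rw [← ENNReal.rpow_one X, ← ENNReal.rpow_mul, one_mul,
              ← ENNReal.rpow_add _ _ X0 Xt, add_sub_cancel]
          rw [c3 K0 hK, c3 V0 Vt]
          calc _ = (A * A⁻¹) * (B ^ (s - 1) * B ^ (1 - s)) * (K * K ^ (s - 1) * (V * V ^ (s - 1))) := by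
                ring
            _ = _ := by rw [c1, c2]; ring

end IsA1

/-! ### The Rubio de Francia iteration -/

/-- The Rubio de Francia iteration `∑ₖ cᵏ Mᵏ h`. -/
noncomputable def rdf (c : ℝ≥0∞) (h : ℝ → ℝ≥0∞) (x : ℝ) : ℝ≥0∞ :=
  ∑' k : ℕ, c ^ k * (maxFun volume)^[k] h x

lemma measurable_iter {h : ℝ → ℝ≥0∞} (hh : Measurable h) (k : ℕ) :
    Measurable ((maxFun volume)^[k] h) := by
  cases k with
  | zero => exact hh
  | succ k => rw [Function.iterate_succ_apply']; exact measurable_maxFun _ _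

lemma measurable_rdf (c : ℝ≥0∞) {h : ℝ → ℝ≥0∞} (hh : Measurable h) : Measurable (rdf c h) := by
  unfold rdf
  exact Measurable.tsum fun k => (measurable_iter hh k).const_mul _

lemma le_rdf (c : ℝ≥0∞) (h : ℝ → ℝ≥0∞) (x : ℝ) : h x ≤ rdf c h x := by
  have := ENNReal.le_tsum (f := fun k : ℕ => c ^ k * (maxFun volume)^[k] h x) 0
  simpa [rdf] using this

lemma mul_maxFun_le_rdf (c : ℝ≥0∞) (h : ℝ → ℝ≥0∞) (x : ℝ) :
    c * maxFun volume h x ≤ rdf c h x := by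
  have := ENNReal.le_tsum (f := fun k : ℕ => c ^ k * (maxFun volume)^[k] h x) 1
  simpa [rdf] using this

/-- The `A_1` property of the iteration: `M` shifts the terms of the series. -/
lemma maxFun_rdf_le {c : ℝ≥0∞} (c0 : c ≠ 0) (ct : c ≠ ∞) {h : ℝ → ℝ≥0∞} (hh : Measurable h)
    (x : ℝ) : maxFun volume (rdf c h) x ≤ c⁻¹ * rdf c h x := by
  refine maxFun_le fun I hI => ?_
  have e1 : avg volume (rdf c h) I = ∑' k : ℕ, c ^ k * avg volume ((maxFun volume)^[k] h) I := by
    unfold avg rdf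
    rw [lintegral_tsum fun k => ((measurable_iter hh k).const_mul _).aemeasurable, div_eq_mul_inv,
      ← ENNReal.tsum_mul_right]
    congr 1; ext k
    rw [lintegral_const_mul _ (measurable_iter hh k), mul_assoc, div_eq_mul_inv]
  rw [e1]
  calc ∑' k : ℕ, c ^ k * avg volume ((maxFun volume)^[k] h) I
      ≤ ∑' k : ℕ, c⁻¹ * (c ^ (k + 1) * (maxFun volume)^[k + 1] h x) := by
        refine ENNReal.tsum_le_tsum fun k => ?_
        rw [pow_succ', ← mul_assoc, ← mul_assoc, ENNReal.inv_mul_cancel c0 ct, one_mul,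
          Function.iterate_succ_apply']
        gcongr
        exact avg_le_maxFun _ _ hI
    _ = c⁻¹ * ∑' k : ℕ, (c ^ (k + 1) * (maxFun volume)^[k + 1] h x) := ENNReal.tsum_mul_left
    _ ≤ c⁻¹ * rdf c h x := by
        gcongr
        unfold rdf
        exact ENNReal.tsum_comp_le_tsum_of_injective (add_left_injective 1) (fun k : ℕ => c ^ k * (maxFun volume)^[k] h x)

/-- The iteration is bounded on `L^p(w)` once `c` is small against the norm of `M`. -/
lemma rdf_bound {p : ℝ} (hp : 1 < p) {w : ℝ → ℝ≥0∞} (hw : Measurable w) {B : ℝ≥0∞}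
    (hM : ∀ f : ℝ → ℝ≥0∞, Measurable f →
      ∫⁻ x, (maxFun volume f x) ^ p * w x ≤ B * ∫⁻ x, f x ^ p * w x)
    {h : ℝ → ℝ≥0∞} (hh : Measurable h) :
    ∫⁻ x, (rdf (4 * (B + 1))⁻¹ h x) ^ p * w x ≤ 2 ^ p * 2 * ∫⁻ x, h x ^ p * w x := by
  have hp0 : 0 < p := by linarith
  set b := (B + 1)⁻¹ with hb
  have hbB : b ^ p * B ≤ 1 := by
    have h1 : B ≤ (B + 1) ^ p := by
      calc B ≤ B + 1 := le_self_add
        _ = (B + 1) ^ (1 : ℝ) := by simp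
        _ ≤ (B + 1) ^ p := ENNReal.rpow_le_rpow_of_exponent_le le_add_self hp.le
    rw [hb, ENNReal.inv_rpow]
    calc _ ≤ ((B + 1) ^ p)⁻¹ * (B + 1) ^ p := by gcongr
      _ ≤ 1 := ENNReal.inv_mul_le_one _
  have hc : (4 * (B + 1))⁻¹ = 2⁻¹ * (2⁻¹ * b) := by
    have h4 : (4 : ℝ≥0∞)⁻¹ = 2⁻¹ * 2⁻¹ := by
      rw [← ENNReal.mul_inv (by simp) (by simp)]
      norm_num
    rw [hb, ENNReal.mul_inv (by simp) (by simp), ← mul_assoc, h4]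
  set e : ℕ → ℝ → ℝ≥0∞ := fun k x => b ^ k * (maxFun volume)^[k] h x with he
  have me : ∀ k, Measurable (e k) := fun k => (measurable_iter hh k).const_mul _
  have hek : ∀ k, ∫⁻ x, e k x ^ p * w x ≤ ∫⁻ x, h x ^ p * w x := by
    intro k
    induction k with
    | zero => simp [he]
    | succ k ih =>
      calc ∫⁻ x, e (k + 1) x ^ p * w x
          = (b ^ (k + 1)) ^ p * ∫⁻ x, (maxFun volume ((maxFun volume)^[k] h) x) ^ p * w x := by
            have m : Measurable fun x =>
                (maxFun volume ((maxFun volume)^[k] h) x) ^ p * w x :=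
              ((measurable_maxFun _ _).pow_const _).mul hw
            rw [← lintegral_const_mul _ m]
            congr 1; ext x
            simp only [he]
            rw [ENNReal.mul_rpow_of_nonneg _ _ hp0.le, mul_assoc, Function.iterate_succ_apply']
        _ ≤ (b ^ (k + 1)) ^ p * (B * ∫⁻ x, ((maxFun volume)^[k] h x) ^ p * w x) := by
            gcongr; exact hM _ (measurable_iter hh k)
        _ = (b ^ p * B) * ((b ^ k) ^ p * ∫⁻ x, ((maxFun volume)^[k] h x) ^ p * w x) := by
            rw [pow_succ, ENNReal.mul_rpow_of_nonneg _ _ hp0.le]; ring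
        _ = (b ^ p * B) * ∫⁻ x, e k x ^ p * w x := by
            have m : Measurable fun x => ((maxFun volume)^[k] h x) ^ p * w x :=
              ((measurable_iter hh k).pow_const _).mul hw
            rw [← lintegral_const_mul _ m]
            congr 2; ext x
            simp only [he]
            rw [ENNReal.mul_rpow_of_nonneg _ _ hp0.le, mul_assoc]
        _ ≤ 1 * ∫⁻ x, h x ^ p * w x := by gcongr
        _ = _ := one_mul _
  have geom : ∑' k : ℕ, (2⁻¹ : ℝ≥0∞) ^ k = 2 := by
    rw [ENNReal.tsum_geometric, ENNReal.one_sub_inv_two, inv_inv]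
  have hpt : ∀ x, (rdf (4 * (B + 1))⁻¹ h x) ^ p ≤ 2 ^ p * ∑' k : ℕ, 2⁻¹ ^ k * e k x ^ p := by
    intro x
    set S := ∑' k : ℕ, (2⁻¹ : ℝ≥0∞) ^ k * e k x ^ p
    have h1 : ∀ k, 2⁻¹ ^ k * e k x ≤ S ^ (1 / p) := by
      intro k
      rw [one_div, ENNReal.le_rpow_inv_iff hp0, ENNReal.mul_rpow_of_nonneg _ _ hp0.le]
      refine le_trans ?_ (ENNReal.le_tsum k)
      gcongr ?_ * e k x ^ p
      calc ((2⁻¹ : ℝ≥0∞) ^ k) ^ p ≤ ((2⁻¹ : ℝ≥0∞) ^ k) ^ (1 : ℝ) :=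
            ENNReal.rpow_le_rpow_of_exponent_ge (pow_le_one₀ zero_le (by norm_num)) hp.le
        _ = _ := ENNReal.rpow_one _
    have h2 : rdf (4 * (B + 1))⁻¹ h x ≤ 2 * S ^ (1 / p) := by
      unfold rdf
      rw [← geom, ← ENNReal.tsum_mul_right]
      refine ENNReal.tsum_le_tsum fun k => ?_
      rw [hc, mul_pow, mul_assoc, mul_pow, mul_assoc]
      gcongr
      exact h1 k
    calc _ ≤ (2 * S ^ (1 / p)) ^ p := ENNReal.rpow_le_rpow h2 hp0.le
      _ = 2 ^ p * S := by
        rw [ENNReal.mul_rpow_of_nonneg _ _ hp0.le, ← ENNReal.rpow_mul, one_div_mul_cancel hp0.ne',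
          ENNReal.rpow_one]
  calc ∫⁻ x, (rdf (4 * (B + 1))⁻¹ h x) ^ p * w x
      ≤ ∫⁻ x, 2 ^ p * ∑' k : ℕ, 2⁻¹ ^ k * (e k x ^ p * w x) := by
        refine lintegral_mono fun x => ?_
        refine (mul_le_mul_left (hpt x) _).trans_eq ?_
        rw [mul_assoc, ← ENNReal.tsum_mul_right]
        simp_rw [mul_assoc]
    _ = 2 ^ p * ∑' k : ℕ, 2⁻¹ ^ k * ∫⁻ x, e k x ^ p * w x := by
        have mew : ∀ k, Measurable fun x => e k x ^ p * w x := fun k =>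
          ((me k).pow_const _).mul hw
        rw [lintegral_const_mul _ (Measurable.tsum fun k => (mew k).const_mul _),
          lintegral_tsum fun k => ((mew k).const_mul _).aemeasurable]
        congr 1
        exact tsum_congr fun k => lintegral_const_mul _ (mew k)
    _ ≤ 2 ^ p * ∑' k : ℕ, 2⁻¹ ^ k * ∫⁻ x, h x ^ p * w x := by
        exact mul_le_mul' le_rfl (ENNReal.tsum_le_tsum fun k => mul_le_mul' le_rfl (hek k))
    _ = _ := by rw [ENNReal.tsum_mul_right, geom, mul_assoc]

/-- If `M h` vanishes at one point then `h` vanishes almost everywhere. -/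
lemma ae_zero_of_maxFun {h : ℝ → ℝ≥0∞} (hh : Measurable h) {x : ℝ} (hx : maxFun volume h x = 0) :
    h =ᵐ[volume] 0 := by
  obtain ⟨n, hn⟩ := exists_nat_gt |x|
  have hcov : (⋃ m : ℕ, qI (-(n + m : ℕ), (n + m : ℕ))) = Set.univ := by
    refine Set.eq_univ_of_forall fun y => ?_
    obtain ⟨m, hm⟩ := exists_nat_gt |y|
    refine Set.mem_iUnion.mpr ⟨m, ?_⟩
    simp only [qI, Set.mem_Ioo]
    push_cast
    have := abs_lt.mp hm
    have hn0 : (0 : ℝ) ≤ n := n.cast_nonneg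
    constructor <;> linarith
  rw [← Measure.restrict_univ (μ := (volume : Measure ℝ)), ← hcov]
  refine (ae_restrict_iUnion_iff _ _).mpr fun m => ?_
  have hxm : x ∈ qI (-(n + m : ℕ), (n + m : ℕ)) := by
    simp only [qI, Set.mem_Ioo]
    push_cast
    have := abs_lt.mp hn
    have hm0 : (0 : ℝ) ≤ m := m.cast_nonneg
    constructor <;> linarith
  have h1 : avg volume h (-(n + m : ℕ), (n + m : ℕ)) = 0 :=
    le_antisymm ((avg_le_maxFun _ _ hxm).trans_eq hx) zero_le
  rw [avg, ENNReal.div_eq_zero_iff] at h1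
  rcases h1 with h1 | h1
  · exact (lintegral_eq_zero_iff hh).mp h1
  · exact absurd h1 (volume_qI_ne_top _)

lemma rdf_isA1 {p : ℝ} (hp : 1 < p) {w : ℝ → ℝ≥0∞} (hw : Measurable w) (w0 : ∀ᵐ x, w x ≠ 0)
    {B : ℝ≥0∞} (hB : B ≠ ∞)
    (hM : ∀ f : ℝ → ℝ≥0∞, Measurable f →
      ∫⁻ x, (maxFun volume f x) ^ p * w x ≤ B * ∫⁻ x, f x ^ p * w x)
    {h : ℝ → ℝ≥0∞} (hh : Measurable h) (hfin : ∫⁻ x, h x ^ p * w x ≠ ∞)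
    (hne : ¬ h =ᵐ[volume] 0) :
    IsA1 (4 * (B + 1)) (rdf (4 * (B + 1))⁻¹ h) := by
  have ct : (4 * (B + 1))⁻¹ ≠ ∞ := ENNReal.inv_ne_top.mpr (by simp)
  have c0 : (4 * (B + 1))⁻¹ ≠ 0 := ENNReal.inv_ne_zero.mpr (by finiteness)
  have mR := measurable_rdf (4 * (B + 1))⁻¹ hh
  refine ⟨mR, Filter.Eventually.of_forall fun x hx => ?_, ?_, fun x => ?_⟩
  · refine hne (ae_zero_of_maxFun hh (x := x) ?_)
    have := mul_maxFun_le_rdf (4 * (B + 1))⁻¹ h x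
    rw [hx, nonpos_iff_eq_zero, mul_eq_zero] at this
    exact this.resolve_left c0
  · have h1 : ∫⁻ x, (rdf (4 * (B + 1))⁻¹ h x) ^ p * w x ≠ ∞ :=
      ne_top_of_le_ne_top (ENNReal.mul_ne_top (by finiteness) hfin) (rdf_bound hp hw hM hh)
    filter_upwards [ae_lt_top ((mR.pow_const p).mul hw) h1, w0] with x hx hx0 htop
    rw [Pi.mul_apply, htop, ENNReal.top_rpow_of_pos (by linarith), ENNReal.top_mul hx0] at hx
    exact lt_irrefl _ hx
  · simpa using maxFun_rdf_le c0 ct hh x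

lemma isAp_one {s : ℝ} (hs : 1 < s) {K : ℝ≥0∞} (hK : 1 ≤ K) : IsAp s K (fun _ => 1) := by
  refine ⟨measurable_const, by simp, by simp, fun I => ?_⟩
  simp only [ENNReal.one_rpow, lintegral_const, one_mul, Measure.restrict_apply_univ]
  have h1 : 0 < s - 1 := by linarith
  have : volume (qI I) * volume (qI I) ^ (s - 1) = volume (qI I) ^ s := by
    conv_rhs => rw [show s = 1 + (s - 1) by ring, ENNReal.rpow_add_of_nonneg _ _ zero_le_one h1.le,
      ENNReal.rpow_one]
  rw [this]
  exact le_mul_of_one_le_left zero_le hK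

/-! ### Extrapolation -/

/-- The core of the extrapolation theorem, for `H ≤ F` whose `L^p(w)` norm is finite. The function
`H ^ (p - 1) * w` norms `H` in the dual space, and `∫ F U` is split by Hölder's inequality with
the weight `U V ^ (1 - s)`, where `U` and `V` are the iterations of the norming function and
of `G`. -/
lemma extrapolation_aux {s p : ℝ} (hs : 1 < s) (hp : 1 < p) {K : ℝ≥0∞} (hK : K ≠ ∞)
    {w : ℝ → ℝ≥0∞} (hw : IsAp p K w) {B B' : ℝ≥0∞} (hB : B = BM p K)
    (hB' : B' = BM (p / (p - 1)) (K ^ (1 / (p - 1)))) {C : ℝ≥0∞}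
    {F G H : ℝ → ℝ≥0∞} (hF : Measurable F) (hG : Measurable G) (hH : Measurable H)
    (hHF : ∀ x, H x ≤ F x)
    (hC : ∀ W, IsAp s ((4 * (B + 1) + 4 * (B' + 1)) ^ s) W →
      ∫⁻ x, F x ^ s * W x ≤ C * ∫⁻ x, G x ^ s * W x)
    (hHfin : ∫⁻ x, H x ^ p * w x ≠ ∞) (hGfin : ∫⁻ x, G x ^ p * w x ≠ ∞) :
    ∫⁻ x, H x ^ p * w x ≤ (C ^ (1 / s) * (2 ^ p * 2) ^ (1 / p)
      * (2 ^ (p / (p - 1)) * 2) ^ ((p - 1) / p)) ^ p * ∫⁻ x, G x ^ p * w x := by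
  have h1 : 0 < p - 1 := by linarith
  have hs1 : 0 < s - 1 := by linarith
  have hp0 : 0 < p := by linarith
  have hs0 : 0 < s := by linarith
  have hp' : 1 < p / (p - 1) := by rw [lt_div_iff₀ h1]; linarith
  have hB0 : B ≠ ∞ := hB ▸ BM_ne_top hp hK
  have hB0' : B' ≠ ∞ := hB' ▸ BM_ne_top hp' (ENNReal.rpow_ne_top_of_nonneg (by positivity) hK)
  set K1 := 4 * (B + 1) + 4 * (B' + 1) with hK1
  have hK1t : K1 ≠ ∞ := by finiteness
  have hK1o : 1 ≤ K1 := by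
    calc (1 : ℝ≥0∞) ≤ 4 * 1 := by norm_num
      _ ≤ 4 * (B + 1) := by gcongr; exact le_add_self
      _ ≤ K1 := le_self_add
  have hK1s : 1 ≤ K1 ^ s := ENNReal.one_le_rpow hK1o hs0
  -- degenerate cases: `G = 0` a.e. or `H = 0` a.e.
  by_cases hG0 : G =ᵐ[volume] 0
  · have e1 : ∫⁻ x, G x ^ s * 1 = 0 := by
      rw [lintegral_eq_zero_iff (by fun_prop)]
      filter_upwards [hG0] with x hx
      simp [hx, hs0]
    have e2 := hC _ (isAp_one hs hK1s)
    rw [e1, mul_zero, nonpos_iff_eq_zero, lintegral_eq_zero_iff (by fun_prop)] at e2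
    have e3 : ∫⁻ x, H x ^ p * w x = 0 := by
      have m : Measurable fun x => H x ^ p * w x := (hH.pow_const _).mul hw.meas
      rw [lintegral_eq_zero_iff m]
      filter_upwards [e2] with x hx
      simp only [mul_one, Pi.zero_apply, ENNReal.rpow_eq_zero_iff] at hx
      have : F x = 0 := by
        rcases hx with hx | hx
        · exact hx.1
        · linarith [hx.2]
      have : H x = 0 := le_antisymm ((hHF x).trans_eq this) zero_le
      simp [this, hp0]
    rw [e3]; exact zero_le
  set N := ∫⁻ x, H x ^ p * w x with hN
  by_cases hN0 : N = 0
  · rw [hN0]; exact zero_le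
  set σ : ℝ → ℝ≥0∞ := fun x => w x ^ (-1 / (p - 1)) with hσ
  have hσA := hw.dual hp
  set h : ℝ → ℝ≥0∞ := fun x => H x ^ (p - 1) * w x with hh
  have mh : Measurable h := (hH.pow_const _).mul hw.meas
  have hHp : ∀ x, H x ^ p = H x * H x ^ (p - 1) := by
    intro x
    conv_lhs => rw [show p = 1 + (p - 1) by ring, ENNReal.rpow_add_of_nonneg _ _ zero_le_one h1.le,
      ENNReal.rpow_one]
  have hint : ∫⁻ x, h x ^ (p / (p - 1)) * σ x = N := by
    rw [hN]
    refine lintegral_congr_ae ?_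
    filter_upwards [hw.ne_zero, hw.ne_top] with x h0 ht
    simp only [hh, hσ]
    rw [ENNReal.mul_rpow_of_nonneg _ _ (by positivity), ← ENNReal.rpow_mul, mul_div_cancel₀ _ h1.ne',
      mul_assoc, ← ENNReal.rpow_add _ _ h0 ht]
    have : p / (p - 1) + -1 / (p - 1) = 1 := by field_simp; ring
    rw [this, ENNReal.rpow_one]
  have hh0 : ¬ h =ᵐ[volume] 0 := by
    intro h0
    apply hN0
    have m : Measurable fun x => h x ^ (p / (p - 1)) * σ x := (mh.pow_const _).mul hσA.meas
    rw [← hint, lintegral_eq_zero_iff m]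
    filter_upwards [h0] with x hx
    simp only [hx, Pi.zero_apply]
    rw [ENNReal.zero_rpow_of_pos (by positivity), zero_mul]
  have bV := fun f hf => hw.maxFun_bound hp hK (f := f) hf
  have bU := fun f hf => hσA.maxFun_bound hp' (ENNReal.rpow_ne_top_of_nonneg (by positivity) hK) (f := f) hf
  rw [← hB] at bV
  rw [← hB'] at bU
  set V := rdf (4 * (B + 1))⁻¹ G
  set U := rdf (4 * (B' + 1))⁻¹ h
  have aV : IsA1 K1 V := (rdf_isA1 hp hw.meas hw.ne_zero hB0 bV hG hGfin hG0).mono le_self_add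
  have aU : IsA1 K1 U :=
    (rdf_isA1 hp' hσA.meas hσA.ne_zero hB0' bU mh (by rw [hint]; exact hHfin) hh0).mono le_add_self
  have mU := aU.meas
  have mV := aV.meas
  have mw := hw.meas
  have cS : s.HolderConjugate (s / (s - 1)) := Real.HolderConjugate.conjExponent hs
  have cP : p.HolderConjugate (p / (p - 1)) := Real.HolderConjugate.conjExponent hp
  set J := ∫⁻ x, V x * U x with hJ
  have s1 : N ≤ ∫⁻ x, F x * U x := by
    rw [hN]
    refine lintegral_mono fun x => ?_
    rw [hHp, mul_assoc]
    exact mul_le_mul' (hHF x) (le_rdf _ h x)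
  have s2 : ∫⁻ x, F x * U x ≤ (∫⁻ x, F x ^ s * (U x * V x ^ (1 - s))) ^ (1 / s)
      * J ^ ((s - 1) / s) := by
    have hol := ENNReal.lintegral_mul_le_Lp_mul_Lq volume cS
      (f := fun x => F x * (U x ^ (1 / s) * V x ^ ((1 - s) / s)))
      (g := fun x => (V x * U x) ^ ((s - 1) / s)) (by fun_prop) (by fun_prop)
    rw [one_div_div] at hol
    refine le_trans (le_of_eq ?_) (hol.trans_eq ?_)
    · refine lintegral_congr_ae ?_
      filter_upwards [aU.ne_zero, aU.ne_top, aV.ne_zero, aV.ne_top] with x u0 ut v0 vt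
      simp only [Pi.mul_apply]
      rw [ENNReal.mul_rpow_of_nonneg _ _ (by positivity)]
      have q1 : U x ^ (1 / s) * U x ^ ((s - 1) / s) = U x := by
        rw [← ENNReal.rpow_add _ _ u0 ut, show 1 / s + (s - 1) / s = 1 by field_simp; ring,
          ENNReal.rpow_one]
      have q2 : V x ^ ((1 - s) / s) * V x ^ ((s - 1) / s) = 1 := by
        rw [← ENNReal.rpow_add _ _ v0 vt, show (1 - s) / s + (s - 1) / s = 0 by field_simp; ring,
          ENNReal.rpow_zero]
      calc F x * U x = F x * (U x ^ (1 / s) * U x ^ ((s - 1) / s)) * (V x ^ ((1 - s) / s) * V x ^ ((s - 1) / s)) := by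
            rw [q1, q2, mul_one]
        _ = _ := by ring
    · congr 2
      · refine lintegral_congr_ae ?_
        filter_upwards [aV.ne_zero, aV.ne_top] with x v0 vt
        rw [ENNReal.mul_rpow_of_nonneg _ _ hs0.le, ENNReal.mul_rpow_of_nonneg _ _ hs0.le,
          ← ENNReal.rpow_mul, ← ENNReal.rpow_mul, one_div_mul_cancel hs0.ne', ENNReal.rpow_one,
          div_mul_cancel₀ _ hs0.ne']
      · rw [hJ]
        congr 1; ext x
        rw [← ENNReal.rpow_mul, show (s - 1) / s * (s / (s - 1)) = 1 by field_simp,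
          ENNReal.rpow_one]
  have s3 : ∫⁻ x, F x ^ s * (U x * V x ^ (1 - s)) ≤ C * J := by
    refine (hC _ (aU.isAp hs hK1o hK1t aV)).trans ?_
    gcongr
    refine lintegral_mono_ae ?_
    filter_upwards [aV.ne_zero, aV.ne_top] with x v0 vt
    calc G x ^ s * (U x * V x ^ (1 - s)) ≤ V x ^ s * (U x * V x ^ (1 - s)) := by
          gcongr; exact le_rdf _ G x
      _ = (V x ^ s * V x ^ (1 - s)) * U x := by ring
      _ = V x * U x := by
          rw [← ENNReal.rpow_add _ _ v0 vt, add_sub_cancel, ENNReal.rpow_one]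
  have s4 : N ≤ C ^ (1 / s) * J := by
    calc N ≤ (C * J) ^ (1 / s) * J ^ ((s - 1) / s) := by
          refine (s1.trans s2).trans ?_
          gcongr
      _ = C ^ (1 / s) * (J ^ (1 / s) * J ^ ((s - 1) / s)) := by
          rw [ENNReal.mul_rpow_of_nonneg _ _ (by positivity)]; ring
      _ = C ^ (1 / s) * J := by
          rw [← ENNReal.rpow_add_of_nonneg _ _ (by positivity) (by positivity),
            show 1 / s + (s - 1) / s = 1 by field_simp; ring, ENNReal.rpow_one]
  have s5 : J ≤ ((2 ^ p * 2) * ∫⁻ x, G x ^ p * w x) ^ (1 / p)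
      * ((2 ^ (p / (p - 1)) * 2) * N) ^ ((p - 1) / p) := by
    have hol := ENNReal.lintegral_mul_le_Lp_mul_Lq volume cP
      (f := fun x => V x * w x ^ (1 / p))
      (g := fun x => U x * w x ^ (-1 / p)) (by fun_prop) (by fun_prop)
    rw [one_div_div] at hol
    refine le_trans (le_of_eq ?_) (hol.trans ?_)
    · refine lintegral_congr_ae ?_
      filter_upwards [hw.ne_zero, hw.ne_top] with x w0 wt
      simp only [Pi.mul_apply]
      have q2 : w x ^ (1 / p) * w x ^ (-1 / p) = 1 := by
        rw [← ENNReal.rpow_add _ _ w0 wt, show 1 / p + -1 / p = 0 by ring, ENNReal.rpow_zero]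
      calc V x * U x = V x * U x * (w x ^ (1 / p) * w x ^ (-1 / p)) := by rw [q2, mul_one]
        _ = _ := by ring
    · gcongr
      · refine le_trans (le_of_eq ?_) (rdf_bound hp hw.meas bV hG)
        congr 1; ext x
        rw [ENNReal.mul_rpow_of_nonneg _ _ hp0.le, ← ENNReal.rpow_mul, one_div_mul_cancel hp0.ne',
          ENNReal.rpow_one]
      · rw [← hint]
        refine le_trans (le_of_eq ?_) (rdf_bound hp' hσA.meas bU mh)
        congr 1; ext x
        rw [ENNReal.mul_rpow_of_nonneg _ _ (by positivity), ← ENNReal.rpow_mul,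
          show -1 / p * (p / (p - 1)) = -1 / (p - 1) by field_simp]
  set g := ∫⁻ x, G x ^ p * w x
  set D := C ^ (1 / s) * (2 ^ p * 2) ^ (1 / p) * (2 ^ (p / (p - 1)) * 2) ^ ((p - 1) / p) with hD
  have s6 : N ≤ D * g ^ (1 / p) * N ^ ((p - 1) / p) := by
    refine s4.trans ((mul_le_mul_right s5 _).trans_eq ?_)
    rw [ENNReal.mul_rpow_of_nonneg (2 ^ p * 2) g (by positivity),
      ENNReal.mul_rpow_of_nonneg (2 ^ (p / (p - 1)) * 2) N (by positivity), hD]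
    ring
  -- divide by `N ^ (1 / p')`
  have s7 : N ^ (1 / p) ≤ D * g ^ (1 / p) := by
    have n0 := rpow_ne_zero' hN0 hHfin ((p - 1) / p)
    have nt := rpow_ne_top' hN0 hHfin ((p - 1) / p)
    rw [← ENNReal.mul_le_mul_iff_left n0 nt]
    refine le_trans (le_of_eq ?_) s6
    rw [← ENNReal.rpow_add _ _ hN0 hHfin, show 1 / p + (p - 1) / p = 1 by field_simp; ring,
      ENNReal.rpow_one]
  have s8 := ENNReal.rpow_le_rpow s7 hp0.le
  rwa [ENNReal.mul_rpow_of_nonneg _ _ hp0.le, ← ENNReal.rpow_mul, ← ENNReal.rpow_mul,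
    one_div_mul_cancel hp0.ne', ENNReal.rpow_one, ENNReal.rpow_one] at s8

/-- Rubio de Francia extrapolation for a family `𝓕` of pairs of functions, from the exponent `s`
to the exponent `p`. -/
theorem extrapolation {s p : ℝ} (hs : 1 < s) (hp : 1 < p)
    {𝓕 : (ℝ → ℝ≥0∞) → (ℝ → ℝ≥0∞) → Prop} (hmeas : ∀ F G, 𝓕 F G → Measurable F ∧ Measurable G)
    (hyp : ∀ K : ℝ≥0∞, K ≠ ∞ → ∃ C : ℝ≥0∞, C ≠ ∞ ∧ ∀ w, IsAp s K w → ∀ F G, 𝓕 F G →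
      ∫⁻ x, F x ^ s * w x ≤ C * ∫⁻ x, G x ^ s * w x)
    (K : ℝ≥0∞) (hK : K ≠ ∞) : ∃ C : ℝ≥0∞, C ≠ ∞ ∧ ∀ w, IsAp p K w → ∀ F G, 𝓕 F G →
      ∫⁻ x, F x ^ p * w x ≤ C * ∫⁻ x, G x ^ p * w x := by
  have h1 : 0 < p - 1 := by linarith
  have hp0 : 0 < p := by linarith
  have hs0 : 0 < s := by linarith
  have hp' : 1 < p / (p - 1) := by rw [lt_div_iff₀ h1]; linarith
  obtain ⟨B, hB⟩ : ∃ B, B = BM p K := ⟨_, rfl⟩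
  obtain ⟨B', hB'⟩ : ∃ B', B' = BM (p / (p - 1)) (K ^ (1 / (p - 1))) := ⟨_, rfl⟩
  have hB0 : B ≠ ∞ := hB ▸ BM_ne_top hp hK
  have hB0' : B' ≠ ∞ := hB' ▸ BM_ne_top hp' (ENNReal.rpow_ne_top_of_nonneg (by positivity) hK)
  obtain ⟨C, hC, hyp⟩ := hyp ((4 * (B + 1) + 4 * (B' + 1)) ^ s)
    (ENNReal.rpow_ne_top_of_nonneg hs0.le (by finiteness))
  set D := (C ^ (1 / s) * (2 ^ p * 2) ^ (1 / p) * (2 ^ (p / (p - 1)) * 2) ^ ((p - 1) / p)) ^ p with hD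
  have hDt : D ≠ ∞ := by
    have a1 := ENNReal.rpow_ne_top_of_nonneg (x := C) (y := 1 / s) (by positivity) hC
    have a2 : (2 ^ p * 2 : ℝ≥0∞) ^ (1 / p) ≠ ∞ :=
      ENNReal.rpow_ne_top_of_nonneg (by positivity) (by finiteness)
    have a3 : (2 ^ (p / (p - 1)) * 2 : ℝ≥0∞) ^ ((p - 1) / p) ≠ ∞ :=
      ENNReal.rpow_ne_top_of_nonneg (by positivity) (ENNReal.mul_ne_top
        (ENNReal.rpow_ne_top_of_nonneg (by positivity) (by simp)) (by simp))
    exact ENNReal.rpow_ne_top_of_nonneg hp0.le (ENNReal.mul_ne_top (ENNReal.mul_ne_top a1 a2) a3)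
  refine ⟨D + 1, by finiteness, fun w hw F G hFG => ?_⟩
  obtain ⟨hF, hG⟩ := hmeas F G hFG
  by_cases hGfin : ∫⁻ x, G x ^ p * w x = ∞
  · rw [hGfin, ENNReal.mul_top (by simp)]; exact le_top
  -- truncations of `F` have finite norm and increase to `F` where `w` is finite
  set S : ℕ → Set ℝ := fun n => Set.Ioo (-n : ℝ) n ∩ {x | w x ≤ n} with hS
  have mS : ∀ n, MeasurableSet (S n) := fun n =>
    measurableSet_Ioo.inter (measurableSet_le hw.meas measurable_const)
  set H : ℕ → ℝ → ℝ≥0∞ := fun n => (S n).indicator (fun x => min (F x) n) with hH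
  have mH : ∀ n, Measurable (H n) := fun n => (hF.min measurable_const).indicator (mS n)
  have mHw : ∀ n, Measurable (fun x => H n x ^ p * w x) := fun n => ((mH n).pow_const _).mul hw.meas
  have hSmono : Monotone S := by
    intro m n hmn x hx
    have hmn' : (m : ℝ) ≤ n := by exact_mod_cast hmn
    have hmn2 : (m : ℝ≥0∞) ≤ n := by exact_mod_cast hmn
    exact ⟨⟨by linarith [hx.1.1], by linarith [hx.1.2]⟩, le_trans hx.2 hmn2⟩
  have bound : ∀ n, ∫⁻ x, H n x ^ p * w x ≤ D * ∫⁻ x, G x ^ p * w x := by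
    intro n
    refine extrapolation_aux hs hp hK hw hB hB' hF hG (mH n) ?_ (fun W hW => hyp W hW F G hFG) ?_ hGfin
    · intro x
      simp only [hH, Set.indicator_apply]
      split_ifs
      · exact min_le_left _ _
      · exact zero_le
    · refine ne_top_of_le_ne_top (b := ∫⁻ x, (Set.Ioo (-n : ℝ) n).indicator
        (fun _ => (n : ℝ≥0∞) ^ p * n) x) ?_ (lintegral_mono fun x => ?_)
      · rw [lintegral_indicator_const measurableSet_Ioo]
        exact ENNReal.mul_ne_top (ENNReal.mul_ne_top (ENNReal.rpow_ne_top_of_nonneg hp0.le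
          (by simp)) (by simp)) (by simp)
      · by_cases hx : x ∈ S n
        · simp only [hH, Set.indicator_of_mem hx, Set.indicator_of_mem hx.1]
          exact mul_le_mul' (ENNReal.rpow_le_rpow (min_le_right _ _) hp0.le) hx.2
        · simp [hH, Set.indicator_of_notMem hx, hp0]
  have lim := lintegral_tendsto_of_tendsto_of_monotone (μ := (volume : Measure ℝ))
    (f := fun n x => H n x ^ p * w x) (F := fun x => F x ^ p * w x)
    (fun n => (mHw n).aemeasurable)
    (Filter.Eventually.of_forall fun x m n hmn => by
      have hmn2 : (m : ℝ≥0∞) ≤ n := by exact_mod_cast hmn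
      refine mul_le_mul' (ENNReal.rpow_le_rpow ?_ hp0.le) le_rfl
      by_cases hx : x ∈ S m
      · simp only [hH, Set.indicator_of_mem hx, Set.indicator_of_mem (hSmono hmn hx)]
        exact min_le_min le_rfl hmn2
      · simp [hH, Set.indicator_of_notMem hx]) (by
      filter_upwards [hw.ne_top] with x hx
      have ev : ∀ᶠ n : ℕ in Filter.atTop, min (F x) n ^ p * w x = H n x ^ p * w x := by
        obtain ⟨n1, hn1⟩ := exists_nat_gt |x|
        obtain ⟨n2, hn2⟩ := ENNReal.exists_nat_gt hx
        filter_upwards [Filter.eventually_ge_atTop (max n1 n2)] with n hn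
        have a1 : (n1 : ℝ) ≤ n := by exact_mod_cast (le_max_left _ _).trans hn
        have a2 : (n2 : ℝ≥0∞) ≤ n := by exact_mod_cast (le_max_right _ _).trans hn
        have := abs_lt.mp hn1
        have hxS : x ∈ S n := ⟨⟨by linarith, by linarith⟩, hn2.le.trans a2⟩
        simp only [hH, Set.indicator_of_mem hxS]
      refine Filter.Tendsto.congr' ev ?_
      refine ENNReal.Tendsto.mul_const ?_ (Or.inr hx)
      refine Filter.Tendsto.ennrpow_const _ ?_
      have t1 : Filter.Tendsto (fun n : ℕ => (n : ℝ≥0∞)) Filter.atTop (nhds ∞) :=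
        ENNReal.tendsto_nat_nhds_top
      have t2 : Filter.Tendsto (fun n : ℕ => min (F x) (n : ℝ≥0∞)) Filter.atTop
        (nhds (min (F x) ∞)) := tendsto_const_nhds.min t1
      simpa using t2)
  refine (le_of_tendsto' lim bound).trans ?_
  gcongr
  exact le_self_add

/-! ### Mixed norms on the line -/

/-- The inner mixed norm `(∑ⱼ (∫ φ(j,ζ)^r dν(ζ))^(q/r))^(1/q)`. -/
noncomputable def mix {Z : Type*} [MeasurableSpace Z] (ν : Measure Z) (q r : ℝ)
    (φ : ℤ → Z → ℝ≥0∞) : ℝ≥0∞ :=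
  (∑' j, (∫⁻ ζ, φ j ζ ^ r ∂ν) ^ (q / r)) ^ (1 / q)

section
variable {X Z : Type*} [MeasurableSpace X] [MeasurableSpace Z] {ν : Measure Z} {q r : ℝ}

lemma mix_mono (hq : 0 < q) (hr : 0 < r) {φ ψ : ℤ → Z → ℝ≥0∞} (h : ∀ j ζ, φ j ζ ≤ ψ j ζ) :
    mix ν q r φ ≤ mix ν q r ψ := by
  unfold mix
  refine ENNReal.rpow_le_rpow (ENNReal.tsum_le_tsum fun j => ?_) (by positivity)
  refine ENNReal.rpow_le_rpow (lintegral_mono fun ζ => ?_) (by positivity)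
  exact ENNReal.rpow_le_rpow (h j ζ) hr.le

lemma mix_const_mul (hq : 0 < q) (hr : 0 < r) {c : ℝ≥0∞} (hc : c ≠ ∞) (φ : ℤ → Z → ℝ≥0∞) :
    mix ν q r (fun j ζ => c * φ j ζ) = c * mix ν q r φ := by
  unfold mix
  have h1 : ∀ j, (∫⁻ ζ, (c * φ j ζ) ^ r ∂ν) ^ (q / r)
      = c ^ q * (∫⁻ ζ, φ j ζ ^ r ∂ν) ^ (q / r) := by
    intro j
    simp_rw [ENNReal.mul_rpow_of_nonneg _ _ hr.le]
    rw [lintegral_const_mul' _ _ (ENNReal.rpow_ne_top_of_nonneg hr.le hc),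
      ENNReal.mul_rpow_of_nonneg _ _ (by positivity), ← ENNReal.rpow_mul, mul_div_cancel₀ _ hr.ne']
  simp_rw [h1]
  rw [ENNReal.tsum_mul_left, ENNReal.mul_rpow_of_nonneg _ _ (by positivity), ← ENNReal.rpow_mul,
    mul_one_div_cancel hq.ne', ENNReal.rpow_one]

lemma measurable_mix [SFinite ν] {g : X → ℤ → Z → ℝ≥0∞}
    (hg : ∀ j, Measurable fun z : X × Z => g z.1 j z.2) :
    Measurable fun x => mix ν q r (g x) := by
  unfold mix
  refine Measurable.pow_const (Measurable.tsum fun j => Measurable.pow_const ?_ _) _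
  exact Measurable.lintegral_prod_right' ((hg j).pow_const r)

lemma measurable_maxFun_param {h : ℝ → Z → ℝ≥0∞} (hh : Measurable fun z : ℝ × Z => h z.1 z.2) :
    Measurable fun z : ℝ × Z => maxFun volume (fun t => h t z.2) z.1 := by
  unfold maxFun
  refine Measurable.iSup fun I => ?_
  have h1 : Measurable fun z : ℝ × Z => avg volume (fun t => h t z.2) I := by
    unfold avg
    refine Measurable.div_const ?_ _
    exact (Measurable.lintegral_prod_left' hh).comp measurable_snd
  have h2 := h1.indicator (measurable_fst (measurableSet_qI I))
  exact h2

end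

section
variable {Z : Type*} [MeasurableSpace Z] (ν : Measure Z) [SFinite ν] {p q r : ℝ}

/-- The weighted bound with values in `L^r(ν)`, at the exponent `r`. -/
lemma maxFun_bound_fiber (hr : 1 < r) {K : ℝ≥0∞} (hK : K ≠ ∞) {w : ℝ → ℝ≥0∞} (hw : IsAp r K w)
    {h : ℝ → Z → ℝ≥0∞} (hh : Measurable fun z : ℝ × Z => h z.1 z.2) :
    ∫⁻ t, (∫⁻ ζ, maxFun volume (fun s => h s ζ) t ^ r ∂ν) * w t
      ≤ BM r K * ∫⁻ t, (∫⁻ ζ, h t ζ ^ r ∂ν) * w t := by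
  have hM := measurable_maxFun_param hh
  have mw := hw.meas
  have swap : ∀ u : ℝ → Z → ℝ≥0∞, (Measurable fun z : ℝ × Z => u z.1 z.2) →
      ∫⁻ t, (∫⁻ ζ, u t ζ ^ r ∂ν) * w t = ∫⁻ ζ, (∫⁻ t, u t ζ ^ r * w t) ∂ν := by
    intro u hu
    have m1 : Measurable fun z : ℝ × Z => u z.1 z.2 ^ r * w z.1 :=
      (hu.pow_const r).mul (mw.comp measurable_fst)
    rw [← lintegral_lintegral_swap m1.aemeasurable]
    congr 1; ext t
    rw [lintegral_mul_const]
    exact (hu.comp measurable_prodMk_left).pow_const r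
  rw [swap _ hM, swap _ hh]
  have m2 : Measurable fun ζ => ∫⁻ t, h t ζ ^ r * w t :=
    Measurable.lintegral_prod_left' ((hh.pow_const r).mul (mw.comp measurable_fst))
  rw [← lintegral_const_mul _ m2]
  exact lintegral_mono fun ζ => hw.maxFun_bound hr hK (hh.comp measurable_prodMk_right)

/-- The vector-valued maximal inequality on `ℝ`. The exponent is moved from `r` to `q` and, after
summation over `j`, from `q` to `p` by extrapolation. -/
theorem maxFun_mixed (hp : 1 < p) (hq : 1 < q) (hr : 1 < r) :
    ∃ C : ℝ≥0∞, C ≠ ∞ ∧ ∀ g : ℝ → ℤ → Z → ℝ≥0∞,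
      (∀ j, Measurable fun z : ℝ × Z => g z.1 j z.2) →
      ∫⁻ t, mix ν q r (fun j ζ => maxFun volume (fun s => g s j ζ) t) ^ p
        ≤ C * ∫⁻ t, mix ν q r (g t) ^ p := by
  have hr0 : 0 < r := by linarith
  have hq0 : 0 < q := by linarith
  have hp0 : 0 < p := by linarith
  let 𝓡 : (ℝ → ℝ≥0∞) → (ℝ → ℝ≥0∞) → Prop := fun F G =>
    ∃ h : ℝ → Z → ℝ≥0∞, (Measurable fun z : ℝ × Z => h z.1 z.2) ∧
      F = (fun t => (∫⁻ ζ, maxFun volume (fun s => h s ζ) t ^ r ∂ν) ^ (1 / r)) ∧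
      G = (fun t => (∫⁻ ζ, h t ζ ^ r ∂ν) ^ (1 / r))
  let 𝓠 : (ℝ → ℝ≥0∞) → (ℝ → ℝ≥0∞) → Prop := fun F G =>
    ∃ g : ℝ → ℤ → Z → ℝ≥0∞, (∀ j, Measurable fun z : ℝ × Z => g z.1 j z.2) ∧
      F = (fun t => mix ν q r (fun j ζ => maxFun volume (fun s => g s j ζ) t)) ∧
      G = (fun t => mix ν q r (g t))
  have mint : ∀ u : ℝ → Z → ℝ≥0∞, (Measurable fun z : ℝ × Z => u z.1 z.2) →
      Measurable fun t => ∫⁻ ζ, u t ζ ^ r ∂ν := fun u hu =>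
    Measurable.lintegral_prod_right' (hu.pow_const r)
  have step1 := extrapolation hr hq (𝓕 := 𝓡)
    (by
      rintro F G ⟨h, hh, rfl, rfl⟩
      exact ⟨(mint _ (measurable_maxFun_param hh)).pow_const _, (mint _ hh).pow_const _⟩)
    (by
      intro K hK
      refine ⟨BM r K, BM_ne_top hr hK, ?_⟩
      rintro w hw F G ⟨h, hh, rfl, rfl⟩
      simp only [← ENNReal.rpow_mul, one_div_mul_cancel hr0.ne', ENNReal.rpow_one]
      exact maxFun_bound_fiber ν hr hK hw hh)
  have step2 := extrapolation hq hp (𝓕 := 𝓠)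
    (by
      rintro F G ⟨g, hg, rfl, rfl⟩
      exact ⟨measurable_mix (g := fun t j ζ => maxFun volume (fun s => g s j ζ) t)
        fun j => measurable_maxFun_param (hg j), measurable_mix hg⟩)
    (by
      intro K hK
      obtain ⟨C, hC, H⟩ := step1 K hK
      refine ⟨C, hC, ?_⟩
      rintro w hw F G ⟨g, hg, rfl, rfl⟩
      have expand : ∀ u : ℝ → ℤ → Z → ℝ≥0∞, (∀ j, Measurable fun z : ℝ × Z => u z.1 j z.2) →
          ∫⁻ t, mix ν q r (u t) ^ q * w t
            = ∑' j, ∫⁻ t, ((∫⁻ ζ, u t j ζ ^ r ∂ν) ^ (1 / r)) ^ q * w t := by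
        intro u hu
        have mj : ∀ j, Measurable fun t => ((∫⁻ ζ, u t j ζ ^ r ∂ν) ^ (1 / r)) ^ q * w t :=
          fun j => (((mint (fun t => u t j) (hu j)).pow_const _).pow_const _).mul hw.meas
        rw [← lintegral_tsum fun j => (mj j).aemeasurable]
        congr 1; ext t
        unfold mix
        rw [ENNReal.tsum_mul_right, ← ENNReal.rpow_mul, one_div_mul_cancel hq0.ne',
          ENNReal.rpow_one]
        simp_rw [← ENNReal.rpow_mul, one_div_mul_eq_div]
      rw [expand g hg, expand (fun t j ζ => maxFun volume (fun s => g s j ζ) t)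
        fun j => measurable_maxFun_param (hg j), ← ENNReal.tsum_mul_left]
      exact ENNReal.tsum_le_tsum fun j => H w hw _ _ ⟨fun t => g t j, hg j, rfl, rfl⟩)
  obtain ⟨C, hC, H⟩ := step2 1 ENNReal.one_ne_top
  refine ⟨C, hC, fun g hg => ?_⟩
  simpa using H _ (isAp_one hp le_rfl) _ _ ⟨g, hg, rfl, rfl⟩

end

/-! ### Iteration over the coordinates -/

section
variable {Z : Type*} [MeasurableSpace Z] (ν : Measure Z) [SFinite ν] {p q r : ℝ}

/-- The one-dimensional maximal function acting in the `i`-th coordinate of `ℝ^d`. -/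
noncomputable def coordMax {d : ℕ} (i : Fin d) (g : (Fin d → ℝ) → ℤ → Z → ℝ≥0∞)
    (x : Fin d → ℝ) (j : ℤ) (ζ : Z) : ℝ≥0∞ :=
  maxFun volume (fun t => g (Function.update x i t) j ζ) (x i)

lemma measurable_coordMax {d : ℕ} (i : Fin d) {g : (Fin d → ℝ) → ℤ → Z → ℝ≥0∞} (j : ℤ)
    (hg : Measurable fun z : (Fin d → ℝ) × Z => g z.1 j z.2) :
    Measurable fun z : (Fin d → ℝ) × Z => coordMax i g z.1 j z.2 := by
  have h1 : Measurable fun z : ℝ × ((Fin d → ℝ) × Z) =>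
      g (Function.update z.2.1 i z.1) j z.2.2 := by
    have m : Measurable fun z : ℝ × ((Fin d → ℝ) × Z) => (Function.update z.2.1 i z.1, z.2.2) := by
      refine Measurable.prodMk ?_ (by fun_prop)
      exact (measurable_update' (a := i)).comp
        (((measurable_fst.comp measurable_snd).prodMk measurable_fst) :
          Measurable fun z : ℝ × ((Fin d → ℝ) × Z) => (z.2.1, z.1))
    exact hg.comp m
  have h2 := measurable_maxFun_param (h := fun t (y : (Fin d → ℝ) × Z) => g (Function.update y.1 i t) j y.2) h1
  have m2 : Measurable fun z : (Fin d → ℝ) × Z => (z.1 i, z) := by fun_prop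
  exact h2.comp m2

/-- `maxFun_mixed` in the `i`-th coordinate, integrated over the others. -/
lemma coordMax_bound {d : ℕ} (i : Fin d) {C : ℝ≥0∞}
    (hC : ∀ g : ℝ → ℤ → Z → ℝ≥0∞, (∀ j, Measurable fun z : ℝ × Z => g z.1 j z.2) →
      ∫⁻ t, mix ν q r (fun j ζ => maxFun volume (fun s => g s j ζ) t) ^ p
        ≤ C * ∫⁻ t, mix ν q r (g t) ^ p)
    {g : (Fin d → ℝ) → ℤ → Z → ℝ≥0∞}
    (hg : ∀ j, Measurable fun z : (Fin d → ℝ) × Z => g z.1 j z.2) :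
    ∫⁻ x, mix ν q r (coordMax i g x) ^ p ≤ C * ∫⁻ x, mix ν q r (g x) ^ p := by
  have mT : Measurable fun x => mix ν q r (coordMax i g x) ^ p :=
    (measurable_mix fun j => measurable_coordMax i j (hg j)).pow_const p
  have mg : Measurable fun x => mix ν q r (g x) ^ p := (measurable_mix hg).pow_const p
  rw [← lintegral_const_mul _ mg, volume_pi]
  refine lintegral_le_of_lmarginal_le {i} mT (mg.const_mul C) fun x => ?_
  rw [lmarginal_singleton, lmarginal_singleton]
  have mu : Measurable fun t : ℝ => mix ν q r (g (Function.update x i t)) ^ p :=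
    mg.comp (measurable_update x)
  simp only
  rw [lintegral_const_mul _ mu]
  have key := hC (fun t => g (Function.update x i t)) fun j => by
    have m : Measurable fun z : ℝ × Z => (Function.update x i z.1, z.2) :=
      ((measurable_update x).comp measurable_fst).prodMk measurable_snd
    exact (hg j).comp m
  refine le_trans (le_of_eq ?_) key
  congr 1; ext t
  congr 2; ext j ζ
  simp [coordMax]

end

/-- A real interval is contained in a rational one of at most twice its length. -/
lemma setLIntegral_Ioo_le (h : ℝ → ℝ≥0∞) {a b t : ℝ} (ht : t ∈ Set.Ioo a b) :
    ∫⁻ s in Set.Ioo a b, h s ≤ 2 * ENNReal.ofReal (b - a) * maxFun volume h t := by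
  have hab : a < b := ht.1.trans ht.2
  obtain ⟨a', ha1, ha2⟩ := exists_rat_btwn (show a - (b - a) / 2 < a by linarith)
  obtain ⟨b', hb1, hb2⟩ := exists_rat_btwn (show b < b + (b - a) / 2 by linarith)
  have hsub : Set.Ioo a b ⊆ qI (a', b') := Set.Ioo_subset_Ioo ha2.le hb1.le
  have htI := hsub ht
  calc ∫⁻ s in Set.Ioo a b, h s ≤ ∫⁻ s in qI (a', b'), h s := lintegral_mono_set hsub
    _ = avg volume h (a', b') * volume (qI (a', b')) := by
        rw [avg, ENNReal.div_mul_cancel (volume_qI_ne_zero htI) (volume_qI_ne_top _)]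
    _ ≤ maxFun volume h t * (2 * ENNReal.ofReal (b - a)) := by
        refine mul_le_mul' (avg_le_maxFun _ _ htI) ?_
        rw [qI, Real.volume_Ioo, show (2 : ℝ≥0∞) = ENNReal.ofReal 2 by simp,
          ← ENNReal.ofReal_mul (by norm_num)]
        refine ENNReal.ofReal_le_ofReal ?_
        simp only
        linarith
    _ = _ := mul_comm _ _

/-- Iteration over the coordinates: partial averages over a box are dominated by a composition of
one-dimensional maximal functions. -/
lemma iterate_coordMax {Z : Type*} [MeasurableSpace Z] (ν : Measure Z) [SFinite ν] {p q r : ℝ}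
    (hp : 1 < p) (hq : 1 < q) (hr : 1 < r) {d : ℕ} (s : Finset (Fin d)) :
    ∃ C : ℝ≥0∞, C ≠ ∞ ∧ ∀ g : (Fin d → ℝ) → ℤ → Z → ℝ≥0∞,
      (∀ j, Measurable fun z : (Fin d → ℝ) × Z => g z.1 j z.2) →
      ∃ G : (Fin d → ℝ) → ℤ → Z → ℝ≥0∞,
        (∀ j, Measurable fun z : (Fin d → ℝ) × Z => G z.1 j z.2) ∧
        (∀ (a b x : Fin d → ℝ), (∀ i, x i ∈ Set.Ioo (a i) (b i)) → ∀ j ζ,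
          (∫⋯∫⁻_s, (fun y => g y j ζ) ∂(fun i => volume.restrict (Set.Ioo (a i) (b i)))) x
            ≤ (∏ i ∈ s, 2 * ENNReal.ofReal (b i - a i)) * G x j ζ) ∧
        ∫⁻ x, mix ν q r (G x) ^ p ≤ C * ∫⁻ x, mix ν q r (g x) ^ p := by
  induction s using Finset.induction_on with
  | empty =>
    exact ⟨1, ENNReal.one_ne_top, fun g hg => ⟨g, hg, fun a b x _ j ζ => by simp, by simp⟩⟩
  | insert i s hi ih =>
    obtain ⟨C, hC, ih⟩ := ih
    obtain ⟨C1, hC1, H1⟩ := maxFun_mixed ν hp hq hr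
    refine ⟨C1 * C, ENNReal.mul_ne_top hC1 hC, fun g hg => ?_⟩
    obtain ⟨G, mG, hG, bG⟩ := ih g hg
    refine ⟨coordMax i G, fun j => measurable_coordMax i j (mG j), ?_, ?_⟩
    · intro a b x hx j ζ
      set P := ∏ i ∈ s, 2 * ENNReal.ofReal (b i - a i) with hP
      have mgj : Measurable fun y => g y j ζ := (hg j).comp measurable_prodMk_right
      have mGj : Measurable fun t => G (Function.update x i t) j ζ :=
        ((mG j).comp measurable_prodMk_right).comp (measurable_update x)
      rw [lmarginal_insert _ mgj hi, Finset.prod_insert hi, ← hP]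
      calc _ ≤ ∫⁻ t in Set.Ioo (a i) (b i), P * G (Function.update x i t) j ζ := by
            refine setLIntegral_mono (mGj.const_mul _) fun t ht => ?_
            refine hG a b _ (fun k => ?_) j ζ
            by_cases hk : k = i
            · subst hk; simpa using ht
            · simpa [hk] using hx k
        _ = P * ∫⁻ t in Set.Ioo (a i) (b i), G (Function.update x i t) j ζ :=
            lintegral_const_mul _ mGj
        _ ≤ P * (2 * ENNReal.ofReal (b i - a i) * coordMax i G x j ζ) :=
            mul_le_mul' le_rfl (setLIntegral_Ioo_le _ (hx i))
        _ = _ := by ring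
    · refine (coordMax_bound ν i H1 mG).trans ?_
      rw [mul_assoc]
      exact mul_le_mul' le_rfl bG

/-- Up to the factor `2 ^ d` from rational endpoints, the iterated maximal function controls every
average over a box. -/
lemma strongMax_le {d : ℕ} {f : (Fin d → ℝ) → ℝ} {x : Fin d → ℝ} {M : ℝ≥0∞}
    (hM : ∀ a b : Fin d → ℝ, (∀ i, x i ∈ Set.Ioo (a i) (b i)) →
      (∫⋯∫⁻_Finset.univ, (fun y => ENNReal.ofReal |f y|)
          ∂(fun i => volume.restrict (Set.Ioo (a i) (b i)))) x
        ≤ (∏ i, 2 * ENNReal.ofReal (b i - a i)) * M) :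
    strongMax f x ≤ 2 ^ d * M := by
  unfold strongMax
  refine iSup_le fun a => iSup_le fun b => iSup_le fun hx => ?_
  have hx' : ∀ i, x i ∈ Set.Ioo (a i) (b i) := fun i => hx i (Set.mem_univ i)
  have hvol : volume (mBox a b) = ∏ i, ENNReal.ofReal (b i - a i) := by
    simp [mBox, volume_pi_pi]
  have h1 := hM a b hx'
  rw [← lintegral_eq_lmarginal_univ, ← Measure.restrict_pi_pi, ← volume_pi,
    Finset.prod_mul_distrib, Finset.prod_const, Finset.card_univ, Fintype.card_fin, ← hvol] at h1
  refine ENNReal.div_le_of_le_mul (h1.trans_eq ?_)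
  ring

theorem statement6 (d : ℕ) (hd : 1 ≤ d) (p q r : ℝ)
    (hp : 1 < p) (hq : 1 < q) (hr : 1 < r) :
    ∃ C : ℝ≥0∞, C ≠ ∞ ∧
      ∀ f : (Fin d → ℝ) → ℤ → (Fin d → ℝ) → ℝ,
        Measurable (fun z : (Fin d → ℝ) × ℤ × (Fin d → ℝ) => f z.1 z.2.1 z.2.2) →
        (∫⁻ x, ((∑' j : ℤ,
            (∫⁻ ζ in frakR d, (strongMax (fun y => f y j ζ) x) ^ r) ^ (q / r)) ^ (1 / q)) ^ p
          ) ^ (1 / p) ≤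
        C * (∫⁻ x, ((∑' j : ℤ,
            (∫⁻ ζ in frakR d, (ENNReal.ofReal |f x j ζ|) ^ r) ^ (q / r)) ^ (1 / q)) ^ p
          ) ^ (1 / p) := by
  have hr0 : 0 < r := by linarith
  have hq0 : 0 < q := by linarith
  have hp0 : 0 < p := by linarith
  obtain ⟨C, hC, H⟩ := iterate_coordMax (volume.restrict (frakR d)) hp hq hr
    (Finset.univ : Finset (Fin d))
  refine ⟨2 ^ d * C ^ (1 / p), ENNReal.mul_ne_top (by finiteness)
    (ENNReal.rpow_ne_top_of_nonneg (by positivity) hC), fun f hf => ?_⟩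
  have hg : ∀ j : ℤ, Measurable fun z : (Fin d → ℝ) × (Fin d → ℝ) =>
      ENNReal.ofReal |f z.1 j z.2| := by
    intro j
    have m : Measurable fun z : (Fin d → ℝ) × (Fin d → ℝ) => (z.1, j, z.2) := by fun_prop
    have m2 : Measurable fun z : (Fin d → ℝ) × (Fin d → ℝ) => f z.1 j z.2 := hf.comp m
    have m3 : Measurable fun t : ℝ => ENNReal.ofReal |t| := by fun_prop
    exact m3.comp m2
  obtain ⟨G, -, hG, bG⟩ := H (fun x j ζ => ENNReal.ofReal |f x j ζ|) hg
  have hle : ∀ x, mix (volume.restrict (frakR d)) q r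
      (fun j ζ => strongMax (fun y => f y j ζ) x) ^ p
      ≤ (2 ^ d) ^ p * mix (volume.restrict (frakR d)) q r (G x) ^ p := by
    intro x
    rw [← ENNReal.mul_rpow_of_nonneg _ _ hp0.le, ← mix_const_mul hq0 hr0 (by finiteness)]
    refine ENNReal.rpow_le_rpow (mix_mono hq0 hr0 fun j ζ => ?_) hp0.le
    exact strongMax_le fun a b hx => hG a b x hx j ζ
  change (∫⁻ x, mix (volume.restrict (frakR d)) q r
      (fun j ζ => strongMax (fun y => f y j ζ) x) ^ p) ^ (1 / p)
    ≤ 2 ^ d * C ^ (1 / p) * (∫⁻ x, mix (volume.restrict (frakR d)) q r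
      (fun j ζ => ENNReal.ofReal |f x j ζ|) ^ p) ^ (1 / p)
  calc _ ≤ ((2 ^ d) ^ p * (C * ∫⁻ x, mix (volume.restrict (frakR d)) q r
          (fun j ζ => ENNReal.ofReal |f x j ζ|) ^ p)) ^ (1 / p) := by
        refine ENNReal.rpow_le_rpow ?_ (by positivity)
        refine (lintegral_mono hle).trans ?_
        rw [lintegral_const_mul' _ _ (ENNReal.rpow_ne_top_of_nonneg hp0.le (by finiteness))]
        exact mul_le_mul' le_rfl bG
    _ = _ := by
        rw [ENNReal.mul_rpow_of_nonneg _ _ (by positivity),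
          ENNReal.mul_rpow_of_nonneg C _ (by positivity), ← ENNReal.rpow_mul,
          mul_one_div_cancel hp0.ne', ENNReal.rpow_one, mul_assoc]
end

section
/- Let d ≥ 1, m ≥ 1 and let f_1, …, f_m : ℝ^d → ℝ be smooth functions with compact support. Then the multilinear strong maximal function 𝓜_R(f_1,…,f_m) is real-valued and continuous on ℝ^d. -/
/-!
The maximal function is uniformly continuous, because the family of rectangles is invariant under
translation. If `R` contains `x` then `R + (x' - x)` contains `x'`, and by uniform continuity of
the compactly supported `f i`, the averages of `|f i|` over the two rectangles differ by at most
`e`, uniformly in `R`, once `x'` is close enough to `x` (`average_translate_le`). All averages are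
bounded by a common bound `C` of the `|f i|` (`average_le`), so the corresponding products differ
by at most `(C + e) ^ m - C ^ m` (`prod_add_le`), and taking suprema gives
`𝓜_R f x ≤ 𝓜_R f x' + ((C + e) ^ m - C ^ m)` (`mStrongMax_le_of_close`), whose last term tends to
`0` with `e`. Finiteness follows from the same bound `C`.
-/

open MeasureTheory ENNReal

/-- Perturbing each factor of a product by `e` costs at most `(C + e) ^ n - C ^ n` when all factors
are at most `C`; stated additively, since subtraction in `ℝ≥0∞` is truncated. -/
lemma prod_add_le {ι : Type*} (s : Finset ι) (a : ι → ℝ≥0∞) (C e : ℝ≥0∞) (h : ∀ i, a i ≤ C) :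
    ∏ i ∈ s, (a i + e) + C ^ s.card ≤ ∏ i ∈ s, a i + (C + e) ^ s.card := by
  classical
  induction s using Finset.induction_on with
  | empty => simp
  | insert j s hj ih =>
    rw [Finset.prod_insert hj, Finset.prod_insert hj, Finset.card_insert_of_notMem hj]
    have hP : ∏ i ∈ s, (a i + e) ≤ (C + e) ^ s.card :=
      Finset.prod_le_pow_card s _ _ fun i _ => by gcongr; exact h i
    have hC : C ^ s.card ≤ (C + e) ^ s.card := by gcongr; exact le_self_add
    obtain ⟨t, ht⟩ := exists_add_of_le (h j)
    generalize ∏ i ∈ s, (a i + e) = P at *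
    generalize ∏ i ∈ s, a i = p at *
    rw [pow_succ, pow_succ]
    generalize C ^ s.card = c at *
    generalize (C + e) ^ s.card = Q at *
    calc (a j + e) * P + c * C = a j * (P + c) + e * P + t * c := by rw [ht]; ring
      _ ≤ a j * (p + Q) + e * Q + t * Q := by gcongr
      _ = a j * p + Q * (C + e) := by rw [ht]; ring

lemma average_le {d : ℕ} (g : (Fin d → ℝ) → ℝ≥0∞) (C : ℝ≥0∞) (hg : ∀ y, g y ≤ C)
    (a b : Fin d → ℝ) :
    (∫⁻ y in mBox a b, g y) / volume (mBox a b) ≤ C := by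
  apply ENNReal.div_le_of_le_mul
  calc ∫⁻ y in mBox a b, g y ≤ ∫⁻ _ in mBox a b, C := lintegral_mono hg
    _ = C * volume (mBox a b) := by simp

lemma preimage_mBox {d : ℕ} (a b h : Fin d → ℝ) :
    (fun y => y + h) ⁻¹' mBox (a + h) (b + h) = mBox a b := by
  ext y
  simp [mBox]

/-- The average over a rectangle is at most that over its translate by `h`, up to an error `e`
controlling the change of the integrand under translation by `h`. -/
lemma average_translate_le {d : ℕ} (g : (Fin d → ℝ) → ℝ≥0∞) (e : ℝ≥0∞)
    (h : Fin d → ℝ) (hg : ∀ y, g y ≤ g (y + h) + e) (a b : Fin d → ℝ) :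
    (∫⁻ y in mBox a b, g y) / volume (mBox a b) ≤
      (∫⁻ y in mBox (a + h) (b + h), g y) / volume (mBox (a + h) (b + h)) + e := by
  have hmp : MeasurePreserving (fun y : Fin d → ℝ => y + h) volume volume :=
    measurePreserving_add_right volume h
  have hemb : MeasurableEmbedding (fun y : Fin d → ℝ => y + h) :=
    measurableEmbedding_addRight h
  have hint := hmp.setLIntegral_comp_preimage_emb hemb g (mBox (a + h) (b + h))
  have hvol := hmp.measure_preimage_emb hemb (mBox (a + h) (b + h))
  rw [preimage_mBox] at hint hvol
  rw [← hint, ← hvol]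
  calc (∫⁻ y in mBox a b, g y) / volume (mBox a b)
      ≤ (∫⁻ y in mBox a b, (g (y + h) + e)) / volume (mBox a b) := by
        gcongr with y; exact hg y
    _ = (∫⁻ y in mBox a b, g (y + h)) / volume (mBox a b)
          + e * volume (mBox a b) / volume (mBox a b) := by
        rw [lintegral_add_right _ measurable_const, ENNReal.add_div]; simp
    _ ≤ _ := by
        gcongr
        exact ENNReal.div_le_of_le_mul le_rfl

lemma mStrongMax_le {d m : ℕ} (f : Fin m → (Fin d → ℝ) → ℝ) (C : ℝ≥0∞)
    (hC : ∀ i y, ENNReal.ofReal |f i y| ≤ C) (x : Fin d → ℝ) : mStrongMax f x ≤ C ^ m := by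
  refine iSup_le fun a => iSup_le fun b => iSup_le fun _ => ?_
  simpa using Finset.prod_le_pow_card Finset.univ _ C fun i _ => average_le _ C (hC i) a b

/-- Comparison of the maximal function at `x` and `x + h`, by translating rectangles by `h`. -/
lemma mStrongMax_le_of_close {d m : ℕ} (f : Fin m → (Fin d → ℝ) → ℝ) (C e : ℝ≥0∞) (hCt : C ≠ ∞)
    (hC : ∀ i y, ENNReal.ofReal |f i y| ≤ C) (x h : Fin d → ℝ)
    (he : ∀ i y, ENNReal.ofReal |f i y| ≤ ENNReal.ofReal |f i (y + h)| + e) :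
    mStrongMax f x ≤ mStrongMax f (x + h) + ((C + e) ^ m - C ^ m) := by
  refine iSup_le fun a => iSup_le fun b => iSup_le fun hx => ?_
  have hx' : x + h ∈ mBox (a + h) (b + h) := by
    rw [← preimage_mBox a b h] at hx
    exact hx
  have hsup : ∏ i : Fin m, (∫⁻ y in mBox (a + h) (b + h), ENNReal.ofReal |f i y|) /
      volume (mBox (a + h) (b + h)) ≤ mStrongMax f (x + h) :=
    le_iSup_of_le (a + h) <| le_iSup_of_le (b + h) <| le_iSup_of_le hx' le_rfl
  refine le_trans ?_ (add_le_add_left hsup _)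
  rw [← AddLECancellable.add_tsub_assoc_of_le (ENNReal.cancel_of_ne (ENNReal.pow_ne_top hCt))
    (by gcongr; exact le_self_add)]
  apply ENNReal.le_sub_of_add_le_right (ENNReal.pow_ne_top hCt)
  refine le_trans (add_le_add_left (Finset.prod_le_prod' fun i _ =>
    average_translate_le (fun y => ENNReal.ofReal |f i y|) e h (he i) a b) _) ?_
  simpa using prod_add_le Finset.univ _ C e
    fun i => average_le (fun y => ENNReal.ofReal |f i y|) C (hC i) (a + h) (b + h)

theorem statement8 (d m : ℕ) (hd : 1 ≤ d) (hm : 1 ≤ m)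
    (f : Fin m → (Fin d → ℝ) → ℝ)
    (hsmooth : ∀ i, ContDiff ℝ (⊤ : ℕ∞) (f i))
    (hsupp : ∀ i, HasCompactSupport (f i)) :
    (∀ x, mStrongMax f x ≠ ∞) ∧
      Continuous (fun x => (mStrongMax f x).toReal) := by
  have hbd : ∃ C : ℝ, 0 ≤ C ∧ ∀ i y, |f i y| ≤ C := by
    choose K hK using fun i => (hsmooth i).continuous.bounded_above_of_compact_support (hsupp i)
    refine ⟨∑ i, |K i|, by positivity, fun i y => ?_⟩
    exact ((hK i y).trans (le_abs_self _)).trans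
      (Finset.single_le_sum (f := fun i => |K i|) (fun _ _ => abs_nonneg _) (Finset.mem_univ i))
  obtain ⟨C, hC0, hC⟩ := hbd
  have hC' : ∀ i y, ENNReal.ofReal |f i y| ≤ ENNReal.ofReal C :=
    fun i y => ENNReal.ofReal_le_ofReal (hC i y)
  have hfin : ∀ x, mStrongMax f x ≠ ∞ := fun x =>
    ne_top_of_le_ne_top (ENNReal.pow_ne_top ENNReal.ofReal_ne_top) (mStrongMax_le f _ hC' x)
  refine ⟨hfin, Metric.continuous_iff.2 fun x ε hε => ?_⟩
  -- An increment `e > 0` for which `(C + e) ^ m - C ^ m < ε`.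
  obtain ⟨e, he0, he⟩ : ∃ e : ℝ, 0 < e ∧ (C + e) ^ m - C ^ m < ε := by
    have hcont : Continuous fun e : ℝ => (C + e) ^ m - C ^ m := by fun_prop
    obtain ⟨δ, hδ, h⟩ := Metric.continuous_iff.1 hcont 0 ε hε
    refine ⟨δ / 2, by positivity, ?_⟩
    have := h (δ / 2) (by rw [Real.dist_eq, sub_zero, abs_of_pos] <;> linarith)
    simp only [Real.dist_eq, add_zero, sub_self, sub_zero] at this
    exact (le_abs_self _).trans_lt this
  have huc : ∃ δ > 0, ∀ i y z, dist y z < δ → dist (f i y) (f i z) < e := by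
    have huni := fun i =>
      Metric.uniformContinuous_iff.1 ((hsupp i).uniformContinuous_of_continuous
        (hsmooth i).continuous) e he0
    choose δ hδ hδ' using huni
    have : Nonempty (Fin m) := ⟨⟨0, hm⟩⟩
    refine ⟨Finset.univ.inf' Finset.univ_nonempty δ, ?_, fun i y z hyz => hδ' i ?_⟩
    · simpa [Finset.lt_inf'_iff] using hδ
    · exact hyz.trans_le (Finset.inf'_le _ (Finset.mem_univ i))
  obtain ⟨δ, hδ, huc⟩ := huc
  have key : ∀ u v : Fin d → ℝ, dist u v < δ →
      (mStrongMax f u).toReal ≤ (mStrongMax f v).toReal + ((C + e) ^ m - C ^ m) := by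
    intro u v huv
    have hclose := mStrongMax_le_of_close f (ENNReal.ofReal C) (ENNReal.ofReal e)
      ENNReal.ofReal_ne_top hC' u (v - u) fun i y => by
        rw [← ENNReal.ofReal_add (abs_nonneg _) he0.le]
        apply ENNReal.ofReal_le_ofReal
        have h1 := huc i y (y + (v - u)) (by
          rw [dist_self_add_right, ← dist_eq_norm, dist_comm]; exact huv)
        rw [Real.dist_eq] at h1
        linarith [abs_sub_abs_le_abs_sub (f i y) (f i (y + (v - u)))]
    have hpow : C ^ m ≤ (C + e) ^ m := by gcongr; linarith
    rw [add_sub_cancel, ← ENNReal.ofReal_add hC0 he0.le, ← ENNReal.ofReal_pow (by positivity),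
      ← ENNReal.ofReal_pow hC0, ← ENNReal.ofReal_sub _ (by positivity)] at hclose
    have := ENNReal.toReal_mono (ENNReal.add_ne_top.2 ⟨hfin v, ENNReal.ofReal_ne_top⟩) hclose
    rwa [ENNReal.toReal_add (hfin v) ENNReal.ofReal_ne_top,
      ENNReal.toReal_ofReal (sub_nonneg.2 hpow)] at this
  refine ⟨δ, hδ, fun y hy => ?_⟩
  rw [Real.dist_eq, abs_lt]
  have h1 := key y x hy
  have h2 := key x y (by rwa [dist_comm])
  constructor <;> linarith
end

section
/- Let d ≥ 1, m ≥ 1, let f_1, …, f_m ∈ L^1(ℝ^d), let ε⃗ = (ε_1,…,ε_d) with each ε_i > 0, and set ε_0 = min_{1 ≤ i ≤ d} ε_i. Define the truncated multilinear strong maximal function 𝓜_R^{ε⃗}(f_1,…,f_m)(x) = sup ∏_{i=1}^m (1/|E_{r⃗}(x)|) ∫_{E_{r⃗}(x)} |f_i(y)| dy, where the supremum is over all r⃗ = (r_1^−,…,r_d^−; r_1^+,…,r_d^+) with all r_i^± > 0 and r_i^+ + r_i^− ≥ ε_i for every i, and E_{r⃗}(x) = (x_1 − r_1^−, x_1 +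 r_1^+) × ⋯ × (x_d − r_d^−, x_d + r_d^+). Then 𝓜_R^{ε⃗}(f_1,…,f_m) is Lipschitz continuous on ℝ^d: for all x, y ∈ ℝ^d, |𝓜_R^{ε⃗}(f_1,…,f_m)(x) − 𝓜_R^{ε⃗}(f_1,…,f_m)(y)| ≤ (2md / ε_0^{md+1}) ( ∏_{j=1}^m ‖f_j‖_{L^1(ℝ^d)} ) |x − y|. -/
/-!
Given a rectangle `E` around `x` with sides `L i`, stretch it by `|x i - y i|` in the `i`-th direction,
towards `y`, to obtain an admissible rectangle `E' ⊇ E` around `y` (`truncBox_subset`). Passing from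
`E` to `E'` can only increase the integrals, so the product of averages drops by at most
`(∏ ‖f j‖₁) * (|E|⁻ᵐ - |E'|⁻ᵐ)`. Bernoulli's inequality together with
`1 - ∑ tᵢ ≤ ∏ (1 - tᵢ)` and `L i ≥ ε₀` bounds the last factor by
`m (∑ |x i - y i|) / ε₀ ^ (m d + 1)` (`volume_drop`). Taking suprema gives a one-sided
Lipschitz bound (`truncMStrongMax_le_add`), which is symmetric in `x` and `y`; finally
`∑ |x i - y i| ≤ d |x - y|`. The argument yields the constant `m d` in place of `2 m d`.
-/

open MeasureTheory ENNReal

/-- The open rectangle `E_{r⃗}(x) = ∏_i (x_i - r_i^-, x_i + r_i^+)`. -/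
def truncBox {d : ℕ} (x rm rp : Fin d → ℝ) : Set (Fin d → ℝ) :=
  Set.univ.pi fun i => Set.Ioo (x i - rm i) (x i + rp i)

/-- The truncated multilinear strong maximal function `𝓜_R^{ε⃗}(f₁,…,f_m)(x)`:
the supremum is over all `r⃗` with `r_i^± > 0` and `r_i^+ + r_i^- ≥ ε_i`. -/
noncomputable def truncMStrongMax {d m : ℕ} (ε : Fin d → ℝ)
    (f : Fin m → (Fin d → ℝ) → ℝ) (x : Fin d → ℝ) : ℝ≥0∞ :=
  ⨆ (rm : Fin d → ℝ) (rp : Fin d → ℝ) (_ : ∀ i, 0 < rm i) (_ : ∀ i, 0 < rp i)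
      (_ : ∀ i, ε i ≤ rm i + rp i),
    ∏ j : Fin m, (∫⁻ y in truncBox x rm rp, ENNReal.ofReal |f j y|)
      / volume (truncBox x rm rp)

lemma truncBox_subset {d : ℕ} (x y rm rp : Fin d → ℝ) :
    truncBox x rm rp ⊆ truncBox y (fun i => rm i + max (y i - x i) 0)
      (fun i => rp i + max (x i - y i) 0) := by
  intro z hz i hi
  have h := hz i hi
  have h1 := le_max_left (y i - x i) 0
  have h2 := le_max_left (x i - y i) 0
  constructor
  · have := h.1
    dsimp only
    linarith
  · have := h.2
    dsimp only
    linarith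

lemma volume_truncBox {d : ℕ} (x rm rp : Fin d → ℝ) (hm : ∀ i, 0 < rm i) (hp : ∀ i, 0 < rp i) :
    volume (truncBox x rm rp) = ENNReal.ofReal (∏ i, (rm i + rp i)) := by
  rw [truncBox, Real.volume_pi_Ioo, ENNReal.ofReal_prod_of_nonneg]
  · refine Finset.prod_congr rfl fun i _ => ?_
    congr 1
    ring
  · intro i _
    linarith [hm i, hp i]

/-- The product of averages over a rectangle, as a real number. -/
lemma prod_average_eq {d m : ℕ} (x rm rp : Fin d → ℝ) (hm : ∀ i, 0 < rm i) (hp : ∀ i, 0 < rp i)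
    (f : Fin m → (Fin d → ℝ) → ℝ) (hf : ∀ j, Integrable (f j) volume) :
    (∏ j : Fin m, (∫⁻ y in truncBox x rm rp, ENNReal.ofReal |f j y|)
      / volume (truncBox x rm rp)) =
    ENNReal.ofReal ((∏ j, ∫ z in truncBox x rm rp, |f j z|) / (∏ i, (rm i + rp i)) ^ m) := by
  have hV : 0 < ∏ i, (rm i + rp i) := Finset.prod_pos fun i _ => add_pos (hm i) (hp i)
  have h : (∏ j, ∫ z in truncBox x rm rp, |f j z|) / (∏ i, (rm i + rp i)) ^ m =
      ∏ j : Fin m, ((∫ z in truncBox x rm rp, |f j z|) / ∏ i, (rm i + rp i)) := by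
    rw [Finset.prod_div_distrib]
    simp
  rw [h, ENNReal.ofReal_prod_of_nonneg]
  · refine Finset.prod_congr rfl fun j _ => ?_
    rw [ENNReal.ofReal_div_of_pos hV, volume_truncBox x rm rp hm hp,
      ofReal_integral_eq_lintegral_ofReal]
    · exact (hf j).abs.integrableOn
    · exact Filter.Eventually.of_forall fun z => abs_nonneg _
  · intro j _
    exact div_nonneg (integral_nonneg fun z => abs_nonneg _) hV.le

lemma one_sub_sum_le_prod {ι : Type*} (s : Finset ι) (t : ι → ℝ) (h0 : ∀ i, 0 ≤ t i)
    (h1 : ∀ i, t i ≤ 1) : 1 - ∑ i ∈ s, t i ≤ ∏ i ∈ s, (1 - t i) := by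
  classical
  induction s using Finset.induction_on with
  | empty => simp
  | insert a s ha ih =>
    rw [Finset.sum_insert ha, Finset.prod_insert ha]
    have h2 : ∏ i ∈ s, (1 - t i) ≤ 1 :=
      Finset.prod_le_one (fun i _ => by linarith [h1 i]) (fun i _ => by linarith [h0 i])
    nlinarith [h0 a]

/-- The `m`-th power of the reciprocal volume of a rectangle with sides `L i ≥ e` is Lipschitz
under enlarging the sides. -/
lemma volume_drop {d : ℕ} (m : ℕ) (e : ℝ) (he : 0 < e) (L δ : Fin d → ℝ)
    (hL : ∀ i, e ≤ L i) (hδ : ∀ i, 0 ≤ δ i) :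
    1 / (∏ i, L i) ^ m - 1 / (∏ i, (L i + δ i)) ^ m ≤ m * (∑ i, δ i) / e ^ (m * d + 1) := by
  have hLp : ∀ i, 0 < L i := fun i => he.trans_le (hL i)
  have hLd : ∀ i, 0 < L i + δ i := fun i => add_pos_of_pos_of_nonneg (hLp i) (hδ i)
  set V := ∏ i, L i
  set V' := ∏ i, (L i + δ i)
  have hV : 0 < V := Finset.prod_pos fun i _ => hLp i
  have hV' : 0 < V' := Finset.prod_pos fun i _ => hLd i
  have hVe : e ^ (m * d) ≤ V ^ m := by
    have : e ^ d ≤ V := by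
      have := Finset.prod_le_prod (s := Finset.univ) (f := fun _ : Fin d => e) (g := L)
        (fun i _ => he.le) (fun i _ => hL i)
      simpa using this
    rw [mul_comm, pow_mul]
    exact pow_le_pow_left₀ (by positivity) this m
  have hprod : 1 - ∑ i, δ i / (L i + δ i) ≤ V / V' := by
    have := one_sub_sum_le_prod Finset.univ (fun i => δ i / (L i + δ i))
      (fun i => div_nonneg (hδ i) (hLd i).le)
      (fun i => (div_le_one (hLd i)).2 (by linarith [hLp i]))
    refine this.trans (le_of_eq ?_)
    rw [← Finset.prod_div_distrib]
    refine Finset.prod_congr rfl fun i _ => ?_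
    have := (hLd i).ne'
    field_simp
    ring
  have hsum : ∑ i, δ i / (L i + δ i) ≤ (∑ i, δ i) / e := by
    rw [Finset.sum_div]
    refine Finset.sum_le_sum fun i _ => ?_
    exact div_le_div_of_nonneg_left (hδ i) he (by linarith [hL i, hδ i])
  have hbern : 1 + (m : ℝ) * (V / V' - 1) ≤ (V / V') ^ m := by
    have := one_add_mul_le_pow (a := V / V' - 1) (by linarith [div_pos hV hV']) m
    simpa using this
  have hS : 0 ≤ ∑ i, δ i := Finset.sum_nonneg fun i _ => hδ i
  have h1 : 1 - (V / V') ^ m ≤ m * ((∑ i, δ i) / e) := by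
    have : (m : ℝ) * (1 - V / V') ≤ m * ((∑ i, δ i) / e) :=
      mul_le_mul_of_nonneg_left (by linarith) (Nat.cast_nonneg m)
    linarith
  calc 1 / V ^ m - 1 / V' ^ m = (1 - (V / V') ^ m) / V ^ m := by
        rw [div_pow]
        field_simp
    _ ≤ (m * ((∑ i, δ i) / e)) / V ^ m := by gcongr
    _ ≤ (m * ((∑ i, δ i) / e)) / e ^ (m * d) := by gcongr
    _ = m * (∑ i, δ i) / e ^ (m * d + 1) := by
        rw [pow_succ]
        field_simp

lemma prod_setIntegral_le {d m : ℕ} (f : Fin m → (Fin d → ℝ) → ℝ)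
    (hf : ∀ j, Integrable (f j) volume) (s : Set (Fin d → ℝ)) :
    ∏ j, ∫ z in s, |f j z| ≤ ∏ j, ∫ z, |f j z| :=
  Finset.prod_le_prod (fun j _ => integral_nonneg fun z => abs_nonneg _) fun j _ =>
    setIntegral_le_integral (hf j).abs (Filter.Eventually.of_forall fun z => abs_nonneg _)

lemma truncMStrongMax_ne_top {d m : ℕ} (ε : Fin d → ℝ) (e : ℝ) (he : 0 < e)
    (hε : ∀ i, e ≤ ε i) (f : Fin m → (Fin d → ℝ) → ℝ)
    (hf : ∀ j, Integrable (f j) volume) (x : Fin d → ℝ) : truncMStrongMax ε f x ≠ ∞ := by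
  refine ne_top_of_le_ne_top
    (ENNReal.ofReal_ne_top (r := (∏ j, ∫ z, |f j z|) / (∏ _i : Fin d, e) ^ m)) ?_
  refine iSup_le fun rm => iSup_le fun rp => iSup_le fun hm => iSup_le fun hp => iSup_le fun hr => ?_
  rw [prod_average_eq x rm rp hm hp f hf]
  refine ENNReal.ofReal_le_ofReal ?_
  have hc : ∏ _i : Fin d, e ≤ ∏ i, (rm i + rp i) :=
    Finset.prod_le_prod (fun i _ => he.le) fun i _ => (hε i).trans (hr i)
  have h0 : 0 < ∏ _i : Fin d, e := Finset.prod_pos fun _ _ => he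
  exact div_le_div₀ (Finset.prod_nonneg fun j _ => integral_nonneg fun z => abs_nonneg _)
    (prod_setIntegral_le f hf _) (pow_pos h0 m) (pow_le_pow_left₀ h0.le hc m)

/-- One-sided Lipschitz bound, obtained by comparing each rectangle around `x` with a larger one
around `y`. -/
lemma truncMStrongMax_le_add {d m : ℕ} (ε : Fin d → ℝ) (e : ℝ) (he : 0 < e)
    (hε : ∀ i, e ≤ ε i) (f : Fin m → (Fin d → ℝ) → ℝ)
    (hf : ∀ j, Integrable (f j) volume) (x y : Fin d → ℝ) :
    truncMStrongMax ε f x ≤ truncMStrongMax ε f y + ENNReal.ofReal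
      ((∏ j, ∫ z, |f j z|) * (m * (∑ i, |x i - y i|) / e ^ (m * d + 1))) := by
  refine iSup_le fun rm => iSup_le fun rp => iSup_le fun hm => iSup_le fun hp => iSup_le fun hr => ?_
  set sm : Fin d → ℝ := fun i => rm i + max (y i - x i) 0 with hsm
  set sp : Fin d → ℝ := fun i => rp i + max (x i - y i) 0 with hsp
  have hsm0 : ∀ i, 0 < sm i := fun i => add_pos_of_pos_of_nonneg (hm i) (le_max_right _ _)
  have hsp0 : ∀ i, 0 < sp i := fun i => add_pos_of_pos_of_nonneg (hp i) (le_max_right _ _)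
  have hlen : ∀ i, sm i + sp i = rm i + rp i + |x i - y i| := by
    intro i
    simp only [hsm, hsp]
    rcases le_total (x i) (y i) with h | h
    · rw [max_eq_left (by linarith), max_eq_right (by linarith), abs_of_nonpos (by linarith)]
      ring
    · rw [max_eq_right (by linarith), max_eq_left (by linarith), abs_of_nonneg (by linarith)]
      ring
  have hle : ENNReal.ofReal ((∏ j, ∫ z in truncBox y sm sp, |f j z|) /
      (∏ i, (sm i + sp i)) ^ m) ≤ truncMStrongMax ε f y := by
    rw [← prod_average_eq y sm sp hsm0 hsp0 f hf]
    have hs : ∀ i, ε i ≤ sm i + sp i := fun i => by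
      rw [hlen]
      linarith [hr i, abs_nonneg (x i - y i)]
    exact le_iSup_of_le sm (le_iSup_of_le sp (le_iSup_of_le hsm0 (le_iSup_of_le hsp0
      (le_iSup_of_le hs le_rfl))))
  rw [prod_average_eq x rm rp hm hp f hf]
  refine le_trans ?_ (add_le_add_left hle _)
  refine le_trans (ENNReal.ofReal_le_ofReal ?_) ENNReal.ofReal_add_le
  have hA0 : 0 ≤ ∏ j, ∫ z in truncBox x rm rp, |f j z| :=
    Finset.prod_nonneg fun j _ => integral_nonneg fun z => abs_nonneg _
  have hAle : ∏ j, ∫ z in truncBox x rm rp, |f j z| ≤ ∏ j, ∫ z in truncBox y sm sp, |f j z| :=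
    Finset.prod_le_prod (fun j _ => integral_nonneg fun z => abs_nonneg _) fun j _ =>
      setIntegral_mono_set (hf j).abs.integrableOn
        (Filter.Eventually.of_forall fun z => abs_nonneg _)
        (truncBox_subset x y rm rp).eventuallyLE
  have hA1 := prod_setIntegral_le f hf (truncBox x rm rp)
  have hdrop := volume_drop m e he (fun i => rm i + rp i) (fun i => |x i - y i|)
    (fun i => (hε i).trans (hr i)) (fun i => abs_nonneg _)
  simp only [← hlen] at hdrop
  have hV' : 0 < ∏ i, (sm i + sp i) := Finset.prod_pos fun i _ => add_pos (hsm0 i) (hsp0 i)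
  have hB : (0 : ℝ) ≤ m * (∑ i, |x i - y i|) / e ^ (m * d + 1) := by positivity
  have e1 := mul_le_mul_of_nonneg_left hdrop hA0
  have e2 := mul_le_mul_of_nonneg_right hA1 hB
  have e3 := div_le_div_of_nonneg_right hAle (pow_pos hV' m).le
  rw [mul_sub, mul_one_div, mul_one_div] at e1
  linarith

theorem statement10 (d m : ℕ) (hd : 1 ≤ d) (hm : 1 ≤ m)
    (ε : Fin d → ℝ) (hε : ∀ i, 0 < ε i)
    (ε₀ : ℝ) (hε₀ : IsGLB (Set.range ε) ε₀)
    (f : Fin m → (Fin d → ℝ) → ℝ)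
    (hf : ∀ j, Integrable (f j) volume) :
    (∀ x, truncMStrongMax ε f x ≠ ∞) ∧
      ∀ x y : Fin d → ℝ,
        |(truncMStrongMax ε f x).toReal - (truncMStrongMax ε f y).toReal| ≤
          (2 * m * d / ε₀ ^ (m * d + 1)) * (∏ j : Fin m, ∫ z, |f j z|) *
            Real.sqrt (∑ i, (x i - y i) ^ 2) := by
  have hle : ∀ i, ε₀ ≤ ε i := fun i => hε₀.1 ⟨i, rfl⟩
  -- The infimum over the nonempty finite index set is attained, hence positive.
  have he : 0 < ε₀ := by
    have : Nonempty (Fin d) := ⟨⟨0, hd⟩⟩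
    obtain ⟨k, hk⟩ := Finite.exists_min ε
    refine (hε k).trans_le (hε₀.2 ?_)
    rintro _ ⟨i, rfl⟩
    exact hk i
  have hfin := truncMStrongMax_ne_top ε ε₀ he hle f hf
  refine ⟨hfin, ?_⟩
  have key : ∀ x y : Fin d → ℝ,
      (truncMStrongMax ε f x).toReal - (truncMStrongMax ε f y).toReal ≤
          (2 * m * d / ε₀ ^ (m * d + 1)) * (∏ j : Fin m, ∫ z, |f j z|) *
            Real.sqrt (∑ i, (x i - y i) ^ 2) := by
    intro x y
    set S := Real.sqrt (∑ i, (x i - y i) ^ 2)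
    have hS0 : 0 ≤ S := Real.sqrt_nonneg _
    have hP : 0 ≤ ∏ j : Fin m, ∫ z, |f j z| :=
      Finset.prod_nonneg fun j _ => integral_nonneg fun z => abs_nonneg _
    have hsum : ∑ i, |x i - y i| ≤ d * S := by
      have : ∀ i ∈ Finset.univ, |x i - y i| ≤ S := fun i hi =>
        Real.abs_le_sqrt (Finset.single_le_sum (f := fun i => (x i - y i) ^ 2)
          (fun i _ => sq_nonneg _) hi)
      simpa using Finset.sum_le_card_nsmul _ _ _ this
    have hC : 0 ≤ (∏ j, ∫ z, |f j z|) * (m * (∑ i, |x i - y i|) / ε₀ ^ (m * d + 1)) := by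
      positivity
    have h := ENNReal.toReal_mono (ENNReal.add_ne_top.2 ⟨hfin y, ENNReal.ofReal_ne_top⟩)
      (truncMStrongMax_le_add ε ε₀ he hle f hf x y)
    rw [ENNReal.toReal_add (hfin y) ENNReal.ofReal_ne_top, ENNReal.toReal_ofReal hC] at h
    calc _ ≤ (∏ j, ∫ z, |f j z|) * (m * (∑ i, |x i - y i|) / ε₀ ^ (m * d + 1)) := by linarith
      _ ≤ (∏ j, ∫ z, |f j z|) * (m * (2 * (d * S)) / ε₀ ^ (m * d + 1)) := by
          gcongr
          have : 0 ≤ (d : ℝ) * S := by positivity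
          linarith
      _ = _ := by ring
  intro x y
  rw [abs_sub_le_iff]
  refine ⟨key x y, ?_⟩
  have h := key y x
  simp only [fun i => sub_sq_comm (y i) (x i)] at h
  exact h
end

section
/- Let d ≥ 1 and m ≥ 2. Let f_1, …, f_m ∈ ℓ^1(ℤ^d) and for each i ∈ ℕ let g_{i,1}, …, g_{i,m} ∈ ℓ^1(ℤ^d) satisfy ‖g_{i,j} − f_j‖_{ℓ^1(ℤ^d)} → 0 as i → ∞ for every 1 ≤ j ≤ m. Then Σ_{l=1}^d Σ_{n ∈ ℤ^d} |D_l 𝕄_R(g_{i,1},…,g_{i,m})(n) − D_l 𝕄_R(f_1,…,f_m)(n)| → 0 as i → ∞; that is, ∇𝕄_R(g_{i,1},…,g_{i,m}) → ∇𝕄_R(f_1,…,f_m) in ℓ^1(ℤ^d). -/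
/-!
Since `m ≥ 2`, the maximal operator is continuous from `ℓ¹ × ⋯ × ℓ¹` into `ℓ¹` itself, and the
claim about the discrete gradient follows because each `D_l` is bounded on `ℓ¹`.

If a box `R` contains both `n` and `k`, then it contains the whole discrete interval spanned by
them, so `N(R) ≥ ∏_l (|n_l - k_l| + 1)`. Hence `N(R)^{-m} ≤ N(R)^{-2} ≤ K(n - k)` with the kernel
`K(x) = ∏_l (|x_l| + 1)^{-2}`, and `K` is summable over `ℤ^d` (`tsum_kern_ne_top`).

On a fixed box, replacing the factors `∑_R |f_j|` by `∑_R |g_j|` changes the product by at most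
`T^m ∑_j ∑_R |g_j - f_j|`, where `T ≥ 1` bounds all the `ℓ¹` norms (`prod_le_prod_add`). Dividing
by `N(R)^m` and taking suprema gives the pointwise estimate
`|𝕄_R(g)(n) - 𝕄_R(f)(n)| ≤ T^m ∑_j (|g_j - f_j| * K)(n)` (`discMStrongMax_le_add`), whose sum over
`n` is `T^m (∑ K) ∑_j ‖g_j - f_j‖₁` (`tsum_err`).
-/

open MeasureTheory ENNReal Filter Topology

/-- The set of lattice points of `ℤ^d` inside the open rectangle `∏ (a i, b i) ⊂ ℝ^d`. -/
def latticeBox {d : ℕ} (a b : Fin d → ℝ) : Set (Fin d → ℤ) :=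
  {k | ∀ i, a i < (k i : ℝ) ∧ (k i : ℝ) < b i}

/-- The discrete multilinear strong maximal function `𝕄_R(f₁,…,f_m)(n)`, with values
in `[0,∞]`. -/
noncomputable def discMStrongMax {d m : ℕ} (f : Fin m → (Fin d → ℤ) → ℝ)
    (n : Fin d → ℤ) : ℝ≥0∞ :=
  ⨆ (a : Fin d → ℝ) (b : Fin d → ℝ) (_ : n ∈ latticeBox a b),
    (∏ i : Fin m, ∑' k : Fin d → ℤ,
        (latticeBox a b).indicator (fun k => ENNReal.ofReal |f i k|) k)
      / ((latticeBox a b).ncard : ℝ≥0∞) ^ m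

/-- The summable kernel `K(x) = ∏_l (|x_l| + 1)^{-2}` on `ℤ^d`. -/
noncomputable def kern {d : ℕ} (x : Fin d → ℤ) : ℝ≥0∞ :=
  ∏ l, ((((x l).natAbs + 1 : ℕ) : ℝ≥0∞) ^ 2)⁻¹

lemma tsum_int_ne_top : ∑' t : ℤ, (((t.natAbs + 1 : ℕ) : ℝ≥0∞) ^ 2)⁻¹ ≠ ∞ := by
  have h0 : Summable fun n : ℕ => (((n + 1 : ℕ) : ℝ) ^ 2)⁻¹ :=
    (summable_nat_add_iff 1).2 (Real.summable_nat_pow_inv.2 one_lt_two)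
  have h1 : Summable fun t : ℤ => (((t.natAbs + 1 : ℕ) : ℝ) ^ 2)⁻¹ := by
    apply Summable.of_nat_of_neg
    · simpa using h0
    · simpa using h0
  have h2 := h1.tsum_ofReal_ne_top
  convert h2 using 3 with t
  rw [ENNReal.ofReal_inv_of_pos (by positivity), ENNReal.ofReal_pow (by positivity),
    ENNReal.ofReal_natCast]

lemma tsum_kern_ne_top (d : ℕ) : ∑' x : Fin d → ℤ, kern x ≠ ∞ := by
  classical
  refine ne_top_of_le_ne_top
    (b := (∑' t : ℤ, (((t.natAbs + 1 : ℕ) : ℝ≥0∞) ^ 2)⁻¹) ^ d)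
    (ENNReal.pow_ne_top tsum_int_ne_top) ?_
  rw [ENNReal.tsum_eq_iSup_sum]
  refine iSup_le fun s => ?_
  -- A finite set of lattice points lies in the product of its coordinate projections.
  calc ∑ x ∈ s, kern x
      ≤ ∑ x ∈ Fintype.piFinset (fun l => s.image fun x => x l), kern x :=
        Finset.sum_le_sum_of_subset fun x hx => by
          simp only [Fintype.mem_piFinset, Finset.mem_image]
          exact fun l => ⟨x, hx, rfl⟩
    _ = ∏ l, ∑ t ∈ s.image (fun x => x l), (((t.natAbs + 1 : ℕ) : ℝ≥0∞) ^ 2)⁻¹ :=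
        (Finset.prod_univ_sum (fun l => s.image fun x => x l)
          fun _ t => (((t.natAbs + 1 : ℕ) : ℝ≥0∞) ^ 2)⁻¹).symm
    _ ≤ ∏ _l : Fin d, ∑' t : ℤ, (((t.natAbs + 1 : ℕ) : ℝ≥0∞) ^ 2)⁻¹ :=
        Finset.prod_le_prod' fun l _ => ENNReal.sum_le_tsum _
    _ = _ := by simp

lemma latticeBox_finite {d : ℕ} (a b : Fin d → ℝ) : (latticeBox a b).Finite := by
  refine (Set.finite_Icc (fun i => ⌊a i⌋) (fun i => ⌈b i⌉)).subset fun k hk => ⟨fun i => ?_, fun i => ?_⟩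
  · exact Int.cast_le.1 ((Int.floor_le (a i)).trans (hk i).1.le)
  · exact Int.cast_le.1 ((hk i).2.le.trans (Int.le_ceil (b i)))

lemma one_le_ncard {d : ℕ} {a b : Fin d → ℝ} {n : Fin d → ℤ} (hn : n ∈ latticeBox a b) :
    1 ≤ (latticeBox a b).ncard :=
  (Set.ncard_pos (latticeBox_finite a b)).2 ⟨n, hn⟩

lemma prod_le_ncard {d : ℕ} {a b : Fin d → ℝ} {n k : Fin d → ℤ} (hn : n ∈ latticeBox a b)
    (hk : k ∈ latticeBox a b) : ∏ l, (((n - k) l).natAbs + 1) ≤ (latticeBox a b).ncard := by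
  have h : (↑(Fintype.piFinset fun l => Finset.uIcc (k l) (n l)) : Set (Fin d → ℤ))
      ⊆ latticeBox a b := by
    intro x hx i
    have := Fintype.mem_piFinset.1 (Finset.mem_coe.1 hx) i
    rw [Finset.mem_uIcc] at this
    have h1 : ((k i ⊓ n i : ℤ) : ℝ) ≤ x i := Int.cast_le.2 this.1
    have h2 : (x i : ℝ) ≤ ((k i ⊔ n i : ℤ) : ℝ) := Int.cast_le.2 this.2
    rw [Int.cast_min] at h1
    rw [Int.cast_max] at h2
    exact ⟨(lt_min (hk i).1 (hn i).1).trans_le h1, h2.trans_lt (max_lt (hk i).2 (hn i).2)⟩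
  have := Set.ncard_le_ncard h (latticeBox_finite a b)
  rw [Set.ncard_coe_finset, Fintype.card_piFinset] at this
  simpa only [Int.card_uIcc, Pi.sub_apply] using this

lemma inv_pow_le_kern {d m : ℕ} (hm : 2 ≤ m) {a b : Fin d → ℝ} {n k : Fin d → ℤ}
    (hn : n ∈ latticeBox a b) (hk : k ∈ latticeBox a b) :
    (((latticeBox a b).ncard : ℝ≥0∞) ^ m)⁻¹ ≤ kern (n - k) := by
  have h1 : (1 : ℝ≥0∞) ≤ (latticeBox a b).ncard := by exact_mod_cast one_le_ncard hn
  have h2 : kern (n - k) = (((∏ l, (((n - k) l).natAbs + 1) : ℕ) : ℝ≥0∞) ^ 2)⁻¹ := by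
    rw [kern, Nat.cast_prod, ← Finset.prod_pow, ENNReal.prod_inv_distrib]
    intro i _ j _ _
    exact Or.inr (ENNReal.pow_ne_top (ENNReal.natCast_ne_top _))
  rw [h2, ENNReal.inv_le_inv]
  exact (pow_le_pow_left' (Nat.cast_le.2 (prod_le_ncard hn hk)) 2).trans
    (pow_le_pow_right₀ h1 hm)

/-- Telescoping bound for a product under an additive perturbation of its factors. -/
lemma prod_le_prod_add {ι : Type*} (s : Finset ι) (x y D : ι → ℝ≥0∞) (T : ℝ≥0∞) (hT : 1 ≤ T)
    (hx : ∀ i, x i ≤ T) (hy : ∀ i, y i ≤ T) (h : ∀ i, x i ≤ y i + D i) :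
    ∏ i ∈ s, x i ≤ ∏ i ∈ s, y i + T ^ s.card * ∑ i ∈ s, D i := by
  classical
  induction s using Finset.induction_on with
  | empty => simp
  | insert a s ha ih =>
    rw [Finset.prod_insert ha, Finset.prod_insert ha, Finset.sum_insert ha,
      Finset.card_insert_of_notMem ha]
    have hys : ∏ i ∈ s, y i ≤ T ^ (s.card + 1) :=
      (Finset.prod_le_pow_card s y T fun i _ => hy i).trans
        (pow_le_pow_right₀ hT (Nat.le_succ _))
    calc x a * ∏ i ∈ s, x i
        ≤ x a * (∏ i ∈ s, y i + T ^ s.card * ∑ i ∈ s, D i) := by gcongr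
      _ = x a * ∏ i ∈ s, y i + x a * (T ^ s.card * ∑ i ∈ s, D i) := mul_add _ _ _
      _ ≤ (y a + D a) * ∏ i ∈ s, y i + T * (T ^ s.card * ∑ i ∈ s, D i) := by
          gcongr
          · exact h a
          · exact hx a
      _ = y a * ∏ i ∈ s, y i + (D a * ∏ i ∈ s, y i + T ^ (s.card + 1) * ∑ i ∈ s, D i) := by ring
      _ ≤ y a * ∏ i ∈ s, y i + (D a * T ^ (s.card + 1) + T ^ (s.card + 1) * ∑ i ∈ s, D i) := by
          gcongr
      _ = _ := by ring

/-- The pointwise error `∑_j (|g_j - f_j| * K)(n)`. -/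
noncomputable def err {d m : ℕ} (f g : Fin m → (Fin d → ℤ) → ℝ) (n : Fin d → ℤ) : ℝ≥0∞ :=
  ∑ j, ∑' k, ENNReal.ofReal |g j k - f j k| * kern (n - k)

lemma err_comm {d m : ℕ} (f g : Fin m → (Fin d → ℤ) → ℝ) (n : Fin d → ℤ) :
    err f g n = err g f n := by
  simp only [err, abs_sub_comm]

lemma tsum_err {d m : ℕ} (f g : Fin m → (Fin d → ℤ) → ℝ) :
    ∑' n, err f g n
      = (∑ j, ∑' k, ENNReal.ofReal |g j k - f j k|) * ∑' x : Fin d → ℤ, kern x := by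
  simp only [err]
  rw [Summable.tsum_finsetSum fun _ _ => ENNReal.summable, Finset.sum_mul]
  refine Finset.sum_congr rfl fun j _ => ?_
  rw [ENNReal.tsum_comm, ← ENNReal.tsum_mul_right]
  refine tsum_congr fun k => ?_
  rw [ENNReal.tsum_mul_left]
  congr 1
  exact (Equiv.subRight k).tsum_eq kern

/-- The `ℓ¹` norm of each component, as an extended nonnegative real, is at most `T`. -/
def NormLE {d m : ℕ} (f : Fin m → (Fin d → ℤ) → ℝ) (T : ℝ≥0∞) : Prop :=
  ∀ j, ∑' k, ENNReal.ofReal |f j k| ≤ T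

lemma discMStrongMax_le_add {d m : ℕ} (hm : 2 ≤ m) (f g : Fin m → (Fin d → ℤ) → ℝ) {T : ℝ≥0∞}
    (hT : 1 ≤ T) (hf : NormLE f T) (hg : NormLE g T) (n : Fin d → ℤ) :
    discMStrongMax g n ≤ discMStrongMax f n + T ^ m * err f g n := by
  rw [discMStrongMax]
  refine iSup_le fun a => iSup_le fun b => iSup_le fun hn => ?_
  set R := latticeBox a b with hR
  have hle : ∀ h : (Fin d → ℤ) → ℝ≥0∞, ∑' k, R.indicator h k ≤ ∑' k, h k := fun h =>
    ENNReal.tsum_le_tsum fun k => Set.indicator_le_self _ _ _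
  have key := prod_le_prod_add Finset.univ
    (fun i => ∑' k, R.indicator (fun k => ENNReal.ofReal |g i k|) k)
    (fun i => ∑' k, R.indicator (fun k => ENNReal.ofReal |f i k|) k)
    (fun i => ∑' k, R.indicator (fun k => ENNReal.ofReal |g i k - f i k|) k) T hT
    (fun i => (hle _).trans (hg i)) (fun i => (hle _).trans (hf i)) (fun i => by
      rw [← ENNReal.tsum_add]
      refine ENNReal.tsum_le_tsum fun k => ?_
      by_cases hk : k ∈ R
      · simp only [Set.indicator_of_mem hk]
        rw [← ENNReal.ofReal_add (abs_nonneg _) (abs_nonneg _)]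
        refine ENNReal.ofReal_le_ofReal ?_
        calc |g i k| = |f i k + (g i k - f i k)| := by ring_nf
          _ ≤ _ := abs_add_le _ _
      · simp [Set.indicator_of_notMem hk])
  rw [Finset.card_univ, Fintype.card_fin] at key
  refine (ENNReal.div_le_div_right key _).trans ?_
  rw [ENNReal.add_div]
  gcongr
  · rw [discMStrongMax]
    exact le_iSup_of_le a (le_iSup_of_le b (le_iSup_of_le hn le_rfl))
  · rw [mul_div_assoc]
    gcongr
    rw [ENNReal.div_eq_inv_mul, Finset.mul_sum, err]
    refine Finset.sum_le_sum fun j _ => ?_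
    rw [← ENNReal.tsum_mul_left]
    refine ENNReal.tsum_le_tsum fun k => ?_
    by_cases hk : k ∈ R
    · rw [Set.indicator_of_mem hk, mul_comm]
      gcongr
      exact inv_pow_le_kern hm hn hk
    · simp [Set.indicator_of_notMem hk]

lemma discMStrongMax_ne_top {d m : ℕ} (f : Fin m → (Fin d → ℤ) → ℝ) {T : ℝ≥0∞}
    (hT : T ≠ ∞) (hf : NormLE f T) (n : Fin d → ℤ) : discMStrongMax f n ≠ ∞ := by
  refine ne_top_of_le_ne_top (b := T ^ m) (ENNReal.pow_ne_top hT) ?_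
  rw [discMStrongMax]
  refine iSup_le fun a => iSup_le fun b => iSup_le fun hn => ?_
  have h1 : (1 : ℝ≥0∞) ≤ (latticeBox a b).ncard := by exact_mod_cast one_le_ncard hn
  refine (ENNReal.div_le_of_le_mul ?_)
  refine le_trans ?_ (le_mul_of_one_le_right' (one_le_pow₀ h1))
  have hi : ∀ i ∈ Finset.univ,
      ∑' k, (latticeBox a b).indicator (fun k => ENNReal.ofReal |f i k|) k ≤ T := fun i _ =>
    (ENNReal.tsum_le_tsum fun k => Set.indicator_le_self _ _ _).trans (hf i)
  simpa using Finset.prod_le_pow_card Finset.univ _ T hi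

lemma ofReal_abs_toReal_sub_le {a b E : ℝ≥0∞} (ha : a ≠ ∞) (hb : b ≠ ∞) (h1 : a ≤ b + E)
    (h2 : b ≤ a + E) : ENNReal.ofReal |a.toReal - b.toReal| ≤ E := by
  rcases eq_or_ne E ∞ with rfl | hE
  · exact le_top
  refine ENNReal.ofReal_le_of_le_toReal (abs_sub_le_iff.2 ⟨?_, ?_⟩)
  · have := ENNReal.toReal_mono (ENNReal.add_ne_top.2 ⟨hb, hE⟩) h1
    rw [ENNReal.toReal_add hb hE] at this
    linarith
  · have := ENNReal.toReal_mono (ENNReal.add_ne_top.2 ⟨ha, hE⟩) h2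
    rw [ENNReal.toReal_add ha hE] at this
    linarith

lemma tsum_shift_add {d : ℕ} (F : (Fin d → ℤ) → ℝ≥0∞) (c : Fin d → ℤ) (A : ℝ≥0∞) :
    ∑' n, (A * F (n + c) + A * F n) = 2 * A * ∑' n, F n := by
  have h : ∑' n, F (n + c) = ∑' n, F n := (Equiv.addRight c).tsum_eq F
  rw [ENNReal.tsum_add, ENNReal.tsum_mul_left, ENNReal.tsum_mul_left, h]
  ring

/-- The `ℓ¹` distance of the gradients is controlled by the `ℓ¹` distances of the functions. -/
lemma grad_dist_le {d m : ℕ} (hm : 2 ≤ m) (f g : Fin m → (Fin d → ℤ) → ℝ) {T : ℝ≥0∞}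
    (hT : 1 ≤ T) (hT' : T ≠ ∞) (hf : NormLE f T) (hg : NormLE g T) :
    ∑ l : Fin d, ∑' n : Fin d → ℤ,
        ENNReal.ofReal
          |((discMStrongMax g (n + Pi.single l 1)).toReal -
              (discMStrongMax g n).toReal) -
            ((discMStrongMax f (n + Pi.single l 1)).toReal -
              (discMStrongMax f n).toReal)|
      ≤ (d * (2 * T ^ m) * ∑' x : Fin d → ℤ, kern x) *
          ∑ j, ∑' k, ENNReal.ofReal |g j k - f j k| := by
  have hpt : ∀ n, ENNReal.ofReal |(discMStrongMax g n).toReal - (discMStrongMax f n).toReal|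
      ≤ T ^ m * err f g n := fun n =>
    ofReal_abs_toReal_sub_le (discMStrongMax_ne_top g hT' hg n) (discMStrongMax_ne_top f hT' hf n)
      (discMStrongMax_le_add hm f g hT hf hg n)
      (by rw [err_comm]; exact discMStrongMax_le_add hm g f hT hg hf n)
  have hl : ∀ l : Fin d, ∑' n : Fin d → ℤ,
        ENNReal.ofReal
          |((discMStrongMax g (n + Pi.single l 1)).toReal -
              (discMStrongMax g n).toReal) -
            ((discMStrongMax f (n + Pi.single l 1)).toReal -
              (discMStrongMax f n).toReal)|
      ≤ 2 * T ^ m * ∑' n, err f g n := by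
    intro l
    rw [← tsum_shift_add (err f g) (Pi.single l 1)]
    refine ENNReal.tsum_le_tsum fun n => ?_
    refine le_trans ?_ (add_le_add (hpt (n + Pi.single l 1)) (hpt n))
    rw [← ENNReal.ofReal_add (abs_nonneg _) (abs_nonneg _)]
    refine ENNReal.ofReal_le_ofReal ?_
    rw [sub_sub_sub_comm]
    exact abs_sub _ _
  refine (Finset.sum_le_sum fun l _ => hl l).trans (le_of_eq ?_)
  rw [Finset.sum_const, Finset.card_univ, Fintype.card_fin, nsmul_eq_mul, tsum_err]
  ring

theorem statement12 (d m : ℕ) (hd : 1 ≤ d) (hm : 2 ≤ m)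
    (f : Fin m → (Fin d → ℤ) → ℝ)
    (g : ℕ → Fin m → (Fin d → ℤ) → ℝ)
    (hf : ∀ j, Summable fun n => |f j n|)
    (hg : ∀ i j, Summable fun n => |g i j n|)
    (hconv : ∀ j, Tendsto (fun i => ∑' n : Fin d → ℤ, |g i j n - f j n|) atTop (𝓝 0)) :
    Tendsto (fun i => ∑ l : Fin d, ∑' n : Fin d → ℤ,
        ENNReal.ofReal
          |((discMStrongMax (g i) (n + Pi.single l 1)).toReal -
              (discMStrongMax (g i) n).toReal) -
            ((discMStrongMax f (n + Pi.single l 1)).toReal -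
              (discMStrongMax f n).toReal)|)
      atTop (𝓝 (0 : ℝ≥0∞)) := by
  have hs : ∀ i j, Summable fun n => |g i j n - f j n| := fun i j =>
    ((hg i j).of_abs.sub (hf j).of_abs).abs
  have hδ : Tendsto (fun i => ∑ j, ∑' k, ENNReal.ofReal |g i j k - f j k|) atTop
      (𝓝 (0 : ℝ≥0∞)) := by
    have : Tendsto (fun i => ∑ j, ∑' k, ENNReal.ofReal |g i j k - f j k|) atTop
        (𝓝 (∑ _j : Fin m, (0 : ℝ≥0∞))) := by
      refine tendsto_finsetSum _ fun j _ => ?_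
      have h := ENNReal.tendsto_ofReal (hconv j)
      rw [ENNReal.ofReal_zero] at h
      refine h.congr fun i => ?_
      exact ENNReal.ofReal_tsum_of_nonneg (fun _ => abs_nonneg _) (hs i j)
    simpa using this
  set T : ℝ≥0∞ := 1 + ∑ j, ∑' k, ENNReal.ofReal |f j k| with hTdef
  have hT : 1 ≤ T := le_self_add
  have hT' : T ≠ ∞ := ENNReal.add_ne_top.2 ⟨ENNReal.one_ne_top,
    ENNReal.sum_ne_top.2 fun j _ => (hf j).tsum_ofReal_ne_top⟩
  have hfj : ∀ j, ∑' k, ENNReal.ofReal |f j k| ≤ ∑ j, ∑' k, ENNReal.ofReal |f j k| := fun j =>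
    Finset.single_le_sum (f := fun j => ∑' k, ENNReal.ofReal |f j k|)
      (fun _ _ => zero_le) (Finset.mem_univ j)
  have hfT : NormLE f T := fun j => (hfj j).trans le_add_self
  -- Once the total distance is at most `1`, the norms of `g i` are also bounded by `T`.
  have hev : ∀ᶠ i in atTop, NormLE (g i) T := by
    filter_upwards [hδ.eventually (ge_mem_nhds one_pos)] with i hi j
    have hgj : ∑' k, ENNReal.ofReal |g i j k - f j k| ≤ 1 :=
      (Finset.single_le_sum (f := fun j => ∑' k, ENNReal.ofReal |g i j k - f j k|)
        (fun _ _ => zero_le) (Finset.mem_univ j)).trans hi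
    refine le_trans ?_ (add_le_add hgj (hfj j))
    rw [← ENNReal.tsum_add]
    refine ENNReal.tsum_le_tsum fun k => ?_
    rw [← ENNReal.ofReal_add (abs_nonneg _) (abs_nonneg _)]
    refine ENNReal.ofReal_le_ofReal ?_
    calc |g i j k| = |(g i j k - f j k) + f j k| := by ring_nf
      _ ≤ _ := abs_add_le _ _
  have hC : (d * (2 * T ^ m) * ∑' x : Fin d → ℤ, kern x : ℝ≥0∞) ≠ ∞ :=
    ENNReal.mul_ne_top (ENNReal.mul_ne_top (ENNReal.natCast_ne_top _)
      (ENNReal.mul_ne_top ENNReal.ofNat_ne_top (ENNReal.pow_ne_top hT'))) (tsum_kern_ne_top d)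
  have hlim := ENNReal.Tendsto.const_mul hδ (Or.inr hC)
  rw [mul_zero] at hlim
  refine tendsto_of_tendsto_of_tendsto_of_le_of_le' tendsto_const_nhds hlim
    (Eventually.of_forall fun _ => zero_le) ?_
  filter_upwards [hev] with i hi
  exact grad_dist_le hm f (g i) hT hT' hfT hi
end
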